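/- For every 0 < τ < √2, every c₀ > 0, and every ε > 0, there exists d₀ such that for all d ≥ d₀ and every measurable subset A ⊆ S^{d−1} with c₀ ≤ μ(A) ≤ 1/2, the following holds: Pr_{u,v ~ μ, independent}[ v ∈ A ∣ u ∈ A and ‖u − v‖ ≤ τ ] ≤ Λ(τ, Φ_c^{−1}(μ(A))) + ε, where μ is the normalized uniform measure on S^{d−1}; moreover, equality up to ε is attained when A is a spherical cap of measure μ(A). -/

import Mathlib

open MeasureTheory ProbabilityTheory Real

noncomputable section

/-- The normalized uniform (Haar) measure on the unit sphere `S^{d-1} ⊆ ℝ^d`. -/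
def sphereMeasure (d : ℕ) : Measure (Metric.sphere (0 : EuclideanSpace ℝ (Fin d)) 1) :=
  ((volume : Measure (EuclideanSpace ℝ (Fin d))).toSphere Set.univ)⁻¹
    • (volume : Measure (EuclideanSpace ℝ (Fin d))).toSphere

/-- `Φ_c(η) = Pr_{X ~ N(0,1)}[X ≥ η]`. -/
def gaussTail (η : ℝ) : ℝ := (gaussianReal 0 1 (Set.Ici η)).toReal

/-- `Λ(τ, η) = Pr[X ≥ η ∧ (1 - τ²/2)X + √(τ² - τ⁴/4)·Y ≥ η] / Φ_c(η)` for independent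
standard Gaussians `X, Y`. -/
def lambdaFn (τ η : ℝ) : ℝ :=
  (((gaussianReal 0 1).prod (gaussianReal 0 1))
      {z : ℝ × ℝ | η ≤ z.1 ∧
        η ≤ (1 - τ ^ 2 / 2) * z.1 + Real.sqrt (τ ^ 2 - τ ^ 4 / 4) * z.2}).toReal
    / gaussTail η

/-- The conditional probability `Pr_{u,v ~ μ}[v ∈ A ∣ u ∈ A, ‖u - v‖ ≤ τ]`. -/
def condCollision (d : ℕ) (A : Set (Metric.sphere (0 : EuclideanSpace ℝ (Fin d)) 1))
    (τ : ℝ) : ℝ :=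
  (((sphereMeasure d).prod (sphereMeasure d))
      {uv | uv.2 ∈ A ∧ uv.1 ∈ A ∧ dist uv.1 uv.2 ≤ τ}).toReal
    / (((sphereMeasure d).prod (sphereMeasure d)) {uv | uv.1 ∈ A ∧ dist uv.1 uv.2 ≤ τ}).toReal


abbrev EE (d : ℕ) := EuclideanSpace ℝ (Fin d)
abbrev SS (d : ℕ) := Metric.sphere (0 : EE d) 1

instance sphereMeasure_prob (d : ℕ) [NeZero d] : IsProbabilityMeasure (sphereMeasure d) := by
  constructor
  unfold sphereMeasure
  have h0 : (volume : Measure (EE d)).toSphere Set.univ ≠ 0 := by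
    rw [Measure.toSphere_apply_univ]
    refine mul_ne_zero ?_ (Metric.measure_ball_pos _ _ one_pos).ne'
    simp [NeZero.ne d]
  rw [Measure.smul_apply, smul_eq_mul]
  exact ENNReal.inv_mul_cancel h0 (measure_ne_top _ _)

instance sphereMeasure_openpos (d : ℕ) : (sphereMeasure d).IsOpenPosMeasure := by
  constructor
  intro U hU hne
  unfold sphereMeasure
  rw [Measure.smul_apply, smul_eq_mul]
  refine mul_ne_zero ?_ (hU.measure_ne_zero _ hne)
  simp
  exact ENNReal.mul_ne_top (by simp) (measure_ball_lt_top.ne)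

def rot {d : ℕ} (L : EE d ≃ₗᵢ[ℝ] EE d) (x : SS d) : SS d :=
  ⟨L x, by simp⟩

@[simp] lemma rot_coe {d : ℕ} (L : EE d ≃ₗᵢ[ℝ] EE d) (x : SS d) : (rot L x : EE d) = L x := rfl

lemma rot_continuous {d : ℕ} (L : EE d ≃ₗᵢ[ℝ] EE d) : Continuous (rot L) := by
  unfold rot
  fun_prop

open scoped Pointwise in
lemma toSphere_rot {d : ℕ} (L : EE d ≃ₗᵢ[ℝ] EE d) :
    MeasurePreserving (rot L) (volume : Measure (EE d)).toSphere
      (volume : Measure (EE d)).toSphere := by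
  refine ⟨(rot_continuous L).measurable, ?_⟩
  ext s hs
  rw [Measure.map_apply (rot_continuous L).measurable hs, Measure.toSphere_apply' _ hs,
    Measure.toSphere_apply' _ ((rot_continuous L).measurable hs)]
  congr 1
  have : Set.Ioo (0:ℝ) 1 • ((↑) '' (rot L ⁻¹' s) : Set (EE d))
      = L ⁻¹' (Set.Ioo (0:ℝ) 1 • ((↑) '' s : Set (EE d))) := by
    ext x
    simp only [Set.mem_smul, Set.mem_image, Set.mem_preimage]
    constructor
    · rintro ⟨r, hr, y, ⟨z, hz, rfl⟩, rfl⟩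
      exact ⟨r, hr, _, ⟨rot L z, hz, rfl⟩, by simp⟩
    · rintro ⟨r, hr, y, ⟨z, hz, rfl⟩, h⟩
      refine ⟨r, hr, L.symm z, ⟨⟨L.symm z, by simp⟩, ?_, rfl⟩, ?_⟩
      · have : rot L ⟨L.symm z, by simp⟩ = z := by ext1; simp
        simpa [this] using hz
      · rw [← map_smul, h]; simp
  rw [this]
  exact MeasurePreserving.measure_preimage_equiv (f := L.toHomeomorph.toMeasurableEquiv)
    L.measurePreserving _

lemma rot_mp {d : ℕ} (L : EE d ≃ₗᵢ[ℝ] EE d) :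
    MeasurePreserving (rot L) (sphereMeasure d) (sphereMeasure d) :=
  (toSphere_rot L).smul_measure _

lemma inner_meas {d : ℕ} (a : EE d) : Continuous (fun v : SS d => inner ℝ a (v : EE d)) := by
  fun_prop

/-- reflection taking `a` to `b`. -/
def refl' {d : ℕ} (a b : EE d) : EE d ≃ₗᵢ[ℝ] EE d := ((ℝ ∙ (a - b))ᗮ).reflection

lemma refl'_apply {d : ℕ} {a b : EE d} (h : ‖a‖ = ‖b‖) : refl' a b a = b :=
  Submodule.reflection_sub h

lemma refl'_refl' {d : ℕ} (a b x : EE d) : refl' a b (refl' a b x) = x :=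
  Submodule.reflection_reflection _ x

lemma refl'_inner {d : ℕ} (a b x y : EE d) : inner ℝ (refl' a b x) y = inner ℝ x (refl' a b y) := by
  conv_lhs => rw [← refl'_refl' a b y]
  rw [LinearIsometryEquiv.inner_map_map]

/-- measure of a cap -/
def capm (d : ℕ) [NeZero d] (s : ℝ) : ℝ :=
  (sphereMeasure d).real {v : SS d | s ≤ inner ℝ (EuclideanSpace.single (0 : Fin d) (1:ℝ)) (v : EE d)}

lemma e0_norm (d : ℕ) [NeZero d] : ‖(EuclideanSpace.single (0 : Fin d) (1:ℝ) : EE d)‖ = 1 := by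
  simp

lemma capm_eq {d : ℕ} [NeZero d] (s : ℝ) (a : EE d) (ha : ‖a‖ = 1) :
    (sphereMeasure d).real {v : SS d | s ≤ inner ℝ a (v : EE d)} = capm d s := by
  unfold capm
  have hm := rot_mp (refl' a (EuclideanSpace.single (0 : Fin d) (1:ℝ)))
  rw [← hm.measureReal_preimage]
  · congr 1
    ext v
    simp only [Set.preimage_ofPred_eq, Set.mem_ofPred_eq, rot_coe]
    rw [← refl'_inner, refl'_apply (by simp [ha])]
  · exact (isClosed_le continuous_const (inner_meas _)).nullMeasurableSet

lemma dist_le_iff {d : ℕ} {τ : ℝ} (hτ : 0 ≤ τ) (u v : SS d) :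
    dist u v ≤ τ ↔ 1 - τ ^ 2 / 2 ≤ inner ℝ (u : EE d) (v : EE d) := by
  have h1 : ‖(u : EE d)‖ = 1 := by simp
  have h2 : ‖(v : EE d)‖ = 1 := by simp
  rw [Subtype.dist_eq, dist_eq_norm, ← sq_le_sq₀ (norm_nonneg _) hτ, norm_sub_sq_real, h1, h2]
  constructor <;> intro h <;> linarith

lemma denom_eq {d : ℕ} [NeZero d] {τ : ℝ} (hτ : 0 ≤ τ) (A : Set (SS d)) (hA : MeasurableSet A) :
    ((sphereMeasure d).prod (sphereMeasure d)).real {uv | uv.1 ∈ A ∧ dist uv.1 uv.2 ≤ τ}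
      = (sphereMeasure d).real A * capm d (1 - τ ^ 2 / 2) := by
  have hK : MeasurableSet {uv : SS d × SS d | dist uv.1 uv.2 ≤ τ} :=
    (isClosed_le (by fun_prop) continuous_const).measurableSet
  have hm : MeasurableSet {uv : SS d × SS d | uv.1 ∈ A ∧ dist uv.1 uv.2 ≤ τ} :=
    (measurable_fst hA).inter hK
  rw [measureReal_def, Measure.prod_apply hm]
  have : ∀ u : SS d, (sphereMeasure d) (Prod.mk u ⁻¹' {uv | uv.1 ∈ A ∧ dist uv.1 uv.2 ≤ τ})
      = A.indicator (fun _ => ENNReal.ofReal (capm d (1 - τ ^ 2 / 2))) u := by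
    intro u
    by_cases hu : u ∈ A
    · rw [Set.indicator_of_mem hu, ← capm_eq (1 - τ ^ 2 / 2) (u : EE d) (by simp), ofReal_measureReal]
      congr 1
      ext v
      simp [hu, dist_le_iff hτ]
    · rw [Set.indicator_of_notMem hu]
      simp [hu]
  simp_rw [this]
  rw [lintegral_indicator hA, lintegral_const, ENNReal.toReal_mul, ENNReal.toReal_ofReal]
  · simp [measureReal_def, mul_comm]
  · exact measureReal_nonneg


section Polarization

/-- Abstract polarization data. -/
structure Pol {X : Type} [MetricSpace X] [MeasurableSpace X] (μ : Measure X) (l : X → ℝ) where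
  σ : X → X
  H : X → ℝ
  inv : ∀ x, σ (σ x) = x
  iso : ∀ x y, dist (σ x) (σ y) = dist x y
  mp : MeasurePreserving σ μ μ
  Hc : Continuous H
  Hσ : ∀ x, H (σ x) = - H x
  fix : ∀ x, H x = 0 → σ x = x
  near : ∀ x y, 0 ≤ H x → 0 ≤ H y → dist x y ≤ dist x (σ y)
  up : ∀ x, 0 < H x → l (σ x) < l x

variable {X : Type} [MetricSpace X] [MeasurableSpace X] {μ : Measure X} {l : X → ℝ}

def Pol.pol (P : Pol μ l) (f : X → ℝ) (x : X) : ℝ :=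
  if 0 ≤ P.H x then max (f x) (f (P.σ x)) else min (f x) (f (P.σ x))

lemma Pol.pol_pos (P : Pol μ l) (f : X → ℝ) {x : X} (hx : 0 ≤ P.H x) :
    P.pol f x = max (f x) (f (P.σ x)) ∧ P.pol f (P.σ x) = min (f x) (f (P.σ x)) := by
  refine ⟨by simp [Pol.pol, hx], ?_⟩
  rcases hx.eq_or_lt with h | h
  · have h' := P.fix x h.symm
    rw [h']
    simp [Pol.pol, h']
  · have : ¬ (0 ≤ P.H (P.σ x)) := by rw [P.Hσ]; linarith
    simp only [Pol.pol, this, if_false, P.inv]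
    exact min_comm _ _

lemma Pol.pol_neg (P : Pol μ l) (f : X → ℝ) {x : X} (hx : P.H x ≤ 0) :
    P.pol f x = min (f x) (f (P.σ x)) ∧ P.pol f (P.σ x) = max (f x) (f (P.σ x)) := by
  have h := P.pol_pos f (x := P.σ x) (by rw [P.Hσ]; linarith)
  rw [P.inv] at h
  exact ⟨by rw [h.2, min_comm], by rw [h.1, max_comm]⟩

lemma Pol.pol_mem (P : Pol μ l) (f : X → ℝ) (x : X) (s : Set ℝ) (h : ∀ x, f x ∈ s) :
    P.pol f x ∈ s := by
  unfold Pol.pol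
  split_ifs
  · rcases max_choice (f x) (f (P.σ x)) with h' | h' <;> rw [h'] <;> apply h
  · rcases min_choice (f x) (f (P.σ x)) with h' | h' <;> rw [h'] <;> apply h

lemma Pol.pol_sum (P : Pol μ l) (f : X → ℝ) (φ : ℝ → ℝ) (x : X) :
    φ (P.pol f x) + φ (P.pol f (P.σ x)) = φ (f x) + φ (f (P.σ x)) := by
  have key : φ (max (f x) (f (P.σ x))) + φ (min (f x) (f (P.σ x))) = φ (f x) + φ (f (P.σ x)) := by
    rcases le_total (f x) (f (P.σ x)) with h | h
    · rw [max_eq_right h, min_eq_left h, add_comm]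
    · rw [max_eq_left h, min_eq_right h]
  rcases le_total 0 (P.H x) with h | h
  · rw [(P.pol_pos f h).1, (P.pol_pos f h).2, key]
  · rw [(P.pol_neg f h).1, (P.pol_neg f h).2, add_comm, key]

lemma Pol.pol_lip (P : Pol μ l) (f : X → ℝ) (L : ℝ) (hL : 0 ≤ L)
    (h : ∀ x y, |f x - f y| ≤ L * dist x y) (x y : X) :
    |P.pol f x - P.pol f y| ≤ L * dist x y := by
  -- four comparisons
  have key : ∀ x y, 0 ≤ P.H x → P.H y ≤ 0 → |P.pol f x - P.pol f y| ≤ L * dist x y := by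
    intro x y hx hy
    have hd : dist x (P.σ y) ≤ dist x y := by
      have := P.near x (P.σ y) hx (by rw [P.Hσ]; linarith)
      rwa [P.inv] at this
    have hd2 : dist (P.σ x) y = dist x (P.σ y) := by
      rw [← P.iso, P.inv]
    have h1 := h x y
    have h2 := h (P.σ x) (P.σ y)
    have h3 := h x (P.σ y)
    have h4 := h (P.σ x) y
    rw [P.iso] at h2
    rw [hd2] at h4
    have h5 := mul_le_mul_of_nonneg_left hd hL
    rw [(P.pol_pos f hx).1, (P.pol_neg f hy).1]
    rcases max_choice (f x) (f (P.σ x)) with e1 | e1 <;>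
    rcases min_choice (f y) (f (P.σ y)) with e2 | e2 <;> rw [e1, e2] <;> linarith
  have h1 := h x y
  have h2 := h (P.σ x) (P.σ y)
  rw [P.iso] at h2
  rcases le_total 0 (P.H x) with hx | hx <;> rcases le_total 0 (P.H y) with hy | hy
  · rw [(P.pol_pos f hx).1, (P.pol_pos f hy).1]
    exact (abs_max_sub_max_le_max _ _ _ _).trans (max_le h1 h2)
  · exact key x y hx hy
  · rw [abs_sub_comm, dist_comm]
    exact key y x hy hx
  · rw [(P.pol_neg f hx).1, (P.pol_neg f hy).1]
    exact (abs_min_sub_min_le_max _ _ _ _).trans (max_le h1 h2)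

lemma invol_integral {Y : Type} [MeasurableSpace Y] {ν : Measure Y} {s : Y → Y}
    (hs : Function.Involutive s) (hm : MeasurePreserving s ν ν) (f : Y → ℝ) :
    ∫ y, f (s y) ∂ν = ∫ y, f y ∂ν :=
  MeasurePreserving.integral_comp hm (MeasurableEquiv.ofInvolutive s hs hm.measurable).measurableEmbedding f

lemma pair_integral {Y : Type} [MeasurableSpace Y] {ν : Measure Y} {s : Y → Y}
    (hs : Function.Involutive s) (hm : MeasurePreserving s ν ν) (f : Y → ℝ) (hf : Integrable f ν) :
    ∫ y, (f y + f (s y)) ∂ν = 2 * ∫ y, f y ∂ν := by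
  rw [integral_add hf, invol_integral hs hm]
  · ring
  · exact hm.integrable_comp_of_integrable hf

lemma Pol.integral_pol (P : Pol μ l) (f : X → ℝ) (φ : ℝ → ℝ) 
    (h1 : Integrable (fun x => φ (f x)) μ) (h2 : Integrable (fun x => φ (P.pol f x)) μ) :
    ∫ x, φ (P.pol f x) ∂μ = ∫ x, φ (f x) ∂μ := by
  have e1 := pair_integral P.inv P.mp _ h1
  have e2 := pair_integral P.inv P.mp _ h2
  simp_rw [P.pol_sum] at e2
  linarith

def kern (τ : ℝ) (z : X × X) : ℝ := if dist z.1 z.2 ≤ τ then 1 else 0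

lemma kern_sq (P : Pol μ l) (τ : ℝ) (x y : X) :
    kern τ (P.σ x, P.σ y) = kern τ (x, y) ∧ kern τ (P.σ x, y) = kern τ (x, P.σ y) := by
  unfold kern
  simp only [P.iso]
  rw [← P.iso x, P.inv]
  simp

lemma kern_mono (P : Pol μ l) (τ : ℝ) (x y : X) (hx : 0 ≤ P.H x) (hy : 0 ≤ P.H y) :
    kern τ (x, P.σ y) ≤ kern τ (x, y) := by
  have := P.near x y hx hy
  unfold kern
  simp only
  split_ifs <;> linarith

def QQ (τ : ℝ) (f : X → ℝ) (z : X × X) : ℝ := kern τ z * (f z.1 * f z.2)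

lemma fourpt_pos (P : Pol μ l) (τ : ℝ) (f : X → ℝ) (x y : X) (hx : 0 ≤ P.H x) (hy : 0 ≤ P.H y) :
    (QQ τ f (x, y) + QQ τ f (P.σ x, y)) + (QQ τ f (x, P.σ y) + QQ τ f (P.σ x, P.σ y)) ≤
    (QQ τ (P.pol f) (x, y) + QQ τ (P.pol f) (P.σ x, y)) +
      (QQ τ (P.pol f) (x, P.σ y) + QQ τ (P.pol f) (P.σ x, P.σ y)) := by
  unfold QQ
  simp only [(kern_sq P τ x y).1, (kern_sq P τ x y).2, (P.pol_pos f hx).1, (P.pol_pos f hx).2,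
    (P.pol_pos f hy).1, (P.pol_pos f hy).2]
  have hk := kern_mono P τ x y hx hy
  rcases le_total (f x) (f (P.σ x)) with h1 | h1 <;>
  rcases le_total (f y) (f (P.σ y)) with h2 | h2 <;>
  simp only [max_eq_left h1, max_eq_right h1, min_eq_left h1, min_eq_right h1, max_eq_left h2,
    max_eq_right h2, min_eq_left h2, min_eq_right h2] <;>
  nlinarith [mul_nonneg (sub_nonneg.2 hk) (mul_nonneg (sub_nonneg.2 h1) (sub_nonneg.2 h2))]

lemma four_all (P : Pol μ l) (τ : ℝ) (f : X → ℝ) (x y : X) :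
    (QQ τ f (x, y) + QQ τ f (P.σ x, y)) + (QQ τ f (x, P.σ y) + QQ τ f (P.σ x, P.σ y)) ≤
    (QQ τ (P.pol f) (x, y) + QQ τ (P.pol f) (P.σ x, y)) +
      (QQ τ (P.pol f) (x, P.σ y) + QQ τ (P.pol f) (P.σ x, P.σ y)) := by
  have hs : ∀ x, P.H x ≤ 0 → 0 ≤ P.H (P.σ x) := fun x hx => by rw [P.Hσ]; linarith
  rcases le_total 0 (P.H x) with hx | hx <;> rcases le_total 0 (P.H y) with hy | hy
  · exact fourpt_pos P τ f x y hx hy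
  · have := fourpt_pos P τ f x (P.σ y) hx (hs y hy)
    simp only [P.inv] at this
    linarith
  · have := fourpt_pos P τ f (P.σ x) y (hs x hx) hy
    simp only [P.inv] at this
    linarith
  · have := fourpt_pos P τ f (P.σ x) (P.σ y) (hs x hx) (hs y hy)
    simp only [P.inv] at this
    linarith

lemma Pol.I_le (P : Pol μ l) [IsProbabilityMeasure μ] (τ : ℝ) (f : X → ℝ)
    (h1 : Integrable (QQ τ f) (μ.prod μ)) (h2 : Integrable (QQ τ (P.pol f)) (μ.prod μ)) :
    ∫ z, QQ τ f z ∂(μ.prod μ) ≤ ∫ z, QQ τ (P.pol f) z ∂(μ.prod μ) := by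
  have ma : MeasurePreserving (Prod.map P.σ id) (μ.prod μ) (μ.prod μ) := P.mp.prod (.id μ)
  have mb : MeasurePreserving (Prod.map id P.σ) (μ.prod μ) (μ.prod μ) := MeasurePreserving.prod (.id μ) P.mp
  have ia : Function.Involutive (Prod.map P.σ (id : X → X)) := fun z => by ext <;> simp [P.inv]
  have ib : Function.Involutive (Prod.map (id : X → X) P.σ) := fun z => by ext <;> simp [P.inv]
  have key : ∀ g : X → ℝ, Integrable (QQ τ g) (μ.prod μ) →
      Integrable (fun z => QQ τ g z + QQ τ g (Prod.map P.σ id z)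
        + (QQ τ g (Prod.map id P.σ z) + QQ τ g (Prod.map P.σ id (Prod.map id P.σ z)))) (μ.prod μ) ∧
      ∫ z, (QQ τ g z + QQ τ g (Prod.map P.σ id z)
        + (QQ τ g (Prod.map id P.σ z) + QQ τ g (Prod.map P.σ id (Prod.map id P.σ z)))) ∂(μ.prod μ)
        = 4 * ∫ z, QQ τ g z ∂(μ.prod μ) := by
    intro g hg
    have i1 : Integrable (fun z => QQ τ g z + QQ τ g (Prod.map P.σ id z)) (μ.prod μ) :=
      hg.add (ma.integrable_comp_of_integrable hg)
    refine ⟨i1.add (mb.integrable_comp_of_integrable i1), ?_⟩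
    rw [pair_integral ib mb _ i1, pair_integral ia ma _ hg]
    ring
  have k1 := key f h1
  have k2 := key _ h2
  have := integral_mono k1.1 k2.1 (fun z => by
    exact four_all P τ f z.1 z.2)
  rw [k1.2, k2.2] at this
  linarith

lemma Pol.J_fix (P : Pol μ l) [CompactSpace X] [BorelSpace X] [IsProbabilityMeasure μ]
    [μ.IsOpenPosMeasure] (hl : Continuous l)
    (f : X → ℝ) (hf : Continuous f) (hpf : Continuous (P.pol f)) (hσ : Continuous P.σ)
    (hJ : ∫ x, P.pol f x * l x ∂μ ≤ ∫ x, f x * l x ∂μ) (x : X) (hx : 0 < P.H x) :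
    f (P.σ x) ≤ f x := by
  have int : ∀ g : X → ℝ, Continuous g → Integrable g μ := fun g hg =>
    hg.integrable_of_hasCompactSupport (HasCompactSupport.of_compactSpace g)
  let D : X → ℝ := fun x => (P.pol f x * l x + P.pol f (P.σ x) * l (P.σ x)) -
    (f x * l x + f (P.σ x) * l (P.σ x))
  have Dpos : ∀ x, 0 ≤ P.H x → D x = (max (f x) (f (P.σ x)) - f x) * (l x - l (P.σ x)) := by
    intro x hx
    simp only [D, (P.pol_pos f hx).1, (P.pol_pos f hx).2]
    have := max_add_min (f x) (f (P.σ x))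
    rw [← eq_sub_iff_add_eq'] at this
    rw [this]; ring
  have lle : ∀ x, 0 ≤ P.H x → l (P.σ x) ≤ l x := by
    intro x hx
    rcases hx.eq_or_lt with h | h
    · rw [P.fix x h.symm]
    · exact (P.up x h).le
  have Dnn' : ∀ x, 0 ≤ P.H x → 0 ≤ D x := by
    intro x hx
    rw [Dpos x hx]
    exact mul_nonneg (sub_nonneg.2 (le_max_left _ _)) (sub_nonneg.2 (lle x hx))
  have Dnn : ∀ x, 0 ≤ D x := by
    intro x
    rcases le_total 0 (P.H x) with h | h
    · exact Dnn' x h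
    · have := Dnn' (P.σ x) (by rw [P.Hσ]; linarith)
      simp only [D, P.inv] at this ⊢
      linarith
  have Dc : Continuous D := by fun_prop
  have Dint : ∫ x, D x ∂μ ≤ 0 := by
    have e1 := pair_integral P.inv P.mp _ (int (fun x => P.pol f x * l x) (by fun_prop))
    have e2 := pair_integral P.inv P.mp _ (int (fun x => f x * l x) (by fun_prop))
    simp only [D]
    rw [integral_sub (int _ (by fun_prop)) (int _ (by fun_prop)), e1, e2]
    linarith
  by_contra hlt
  push Not at hlt
  have : 0 < ∫ x, D x ∂μ := by
    refine Dc.integral_pos_of_hasCompactSupport_nonneg_nonzero (HasCompactSupport.of_compactSpace D)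
      Dnn (x := x) ?_
    rw [Dpos x hx.le, max_eq_right hlt.le]
    exact (mul_pos (sub_pos.2 hlt) (sub_pos.2 (P.up x hx))).ne'
  linarith

end Polarization


section Rearr

open BoundedContinuousFunction

set_option linter.unusedSectionVars false

variable {X : Type} [MetricSpace X] [MeasurableSpace X] {μ : Measure X} {l : X → ℝ}

lemma bcf_integral_continuous {Y : Type} [TopologicalSpace Y] [MeasurableSpace Y]
    [OpensMeasurableSpace Y] (ν : Measure Y) [IsFiniteMeasure ν] :
    Continuous (fun h : Y →ᵇ ℝ => ∫ y, h y ∂ν) := by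
  refine (LipschitzWith.of_dist_le_mul (K := (ν.real Set.univ).toNNReal) ?_).continuous
  intro f g
  rw [Real.coe_toNNReal _ measureReal_nonneg, dist_eq_norm, dist_eq_norm,
    ← integral_sub (f.integrable ν) (g.integrable ν)]
  exact (f - g).norm_integral_le_mul_norm ν

lemma kern_set_meas [SecondCountableTopology X] [BorelSpace X] (τ : ℝ) :
    MeasurableSet {z : X × X | dist z.1 z.2 ≤ τ} :=
  (isClosed_le (by fun_prop) continuous_const).measurableSet

lemma QQ_indicator (τ : ℝ) (f : X → ℝ) :
    QQ τ f = Set.indicator {z : X × X | dist z.1 z.2 ≤ τ} (fun z => f z.1 * f z.2) := by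
  ext z
  by_cases h : dist z.1 z.2 ≤ τ <;> simp [QQ, kern, h, Set.indicator]

lemma QQ_meas [SecondCountableTopology X] [BorelSpace X] (τ : ℝ) (f : X → ℝ) (hf : Measurable f) :
    Measurable (QQ τ f) := by
  rw [QQ_indicator]
  exact (by fun_prop : Measurable (fun z : X × X => f z.1 * f z.2)).indicator (kern_set_meas τ)

lemma QQ_bound (τ : ℝ) (f : X → ℝ) (hf : ∀ x, f x ∈ Set.Icc (0:ℝ) 1) (z : X × X) :
    ‖QQ τ f z‖ ≤ 1 := by
  have h1 := hf z.1
  have h2 := hf z.2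
  have h3 : 0 ≤ f z.1 * f z.2 := mul_nonneg h1.1 h2.1
  have h4 : f z.1 * f z.2 ≤ 1 := mul_le_one₀ h1.2 h2.1 h2.2
  unfold QQ kern
  rw [Real.norm_eq_abs, abs_le]
  split_ifs <;> constructor <;> linarith

lemma QQ_int [SecondCountableTopology X] [BorelSpace X] [IsProbabilityMeasure μ] (τ : ℝ) (f : X → ℝ)
    (hm : Measurable f) (hf : ∀ x, f x ∈ Set.Icc (0:ℝ) 1) : Integrable (QQ τ f) (μ.prod μ) :=
  Integrable.of_bound (QQ_meas τ f hm).aestronglyMeasurable 1 (.of_forall (QQ_bound τ f hf))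

lemma QQ_continuous [SecondCountableTopology X] [BorelSpace X] [IsProbabilityMeasure μ] (τ : ℝ) :
    Continuous (fun f : X →ᵇ ℝ => ∫ z, QQ τ f z ∂(μ.prod μ)) := by
  let F : (X →ᵇ ℝ) → (X × X →ᵇ ℝ) := fun f =>
    (f.compContinuous ⟨Prod.fst, continuous_fst⟩) * (f.compContinuous ⟨Prod.snd, continuous_snd⟩)
  have hF : Continuous F := (continuous_compContinuous _).mul (continuous_compContinuous _)
  have := (bcf_integral_continuous ((μ.prod μ).restrict {z : X × X | dist z.1 z.2 ≤ τ})).comp hF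
  convert! this using 2 with f
  rw [QQ_indicator, integral_indicator (kern_set_meas τ)]
  rfl

theorem rearr [CompactSpace X] [BorelSpace X] [IsProbabilityMeasure μ] [μ.IsOpenPosMeasure]
    (hl : Continuous l) (hpol : ∀ x y, l y < l x → ∃ P : Pol μ l, P.σ x = y ∧ 0 < P.H x)
    (τ : ℝ) (f : X →ᵇ ℝ) (L : ℝ) (hL : 0 ≤ L) (hLip : ∀ x y, |f x - f y| ≤ L * dist x y)
    (hf : ∀ x, f x ∈ Set.Icc (0:ℝ) 1) :
    ∃ g : X →ᵇ ℝ, (∀ x, g x ∈ Set.Icc (0:ℝ) 1) ∧ ∫ x, g x ∂μ = ∫ x, f x ∂μ ∧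
      ∫ x, (g x) ^ 2 ∂μ = ∫ x, (f x) ^ 2 ∂μ ∧
      ∫ z, QQ τ f z ∂(μ.prod μ) ≤ ∫ z, QQ τ g z ∂(μ.prod μ) ∧
      ∀ x y, l y < l x → g y ≤ g x := by
  let F : Set (X →ᵇ ℝ) := {g | (∀ x, g x ∈ Set.Icc (0:ℝ) 1) ∧ (∀ x y, |g x - g y| ≤ L * dist x y) ∧
    ∫ x, g x ∂μ = ∫ x, f x ∂μ ∧ ∫ x, (g x) ^ 2 ∂μ = ∫ x, (f x) ^ 2 ∂μ ∧
      ∫ z, QQ τ f z ∂(μ.prod μ) ≤ ∫ z, QQ τ g z ∂(μ.prod μ)}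
  have ev : ∀ x, Continuous (fun g : X →ᵇ ℝ => g x) := fun x => continuous_eval_const x
  have c1 : Continuous (fun g : X →ᵇ ℝ => ∫ x, g x ∂μ) := bcf_integral_continuous μ
  have c2 : Continuous (fun g : X →ᵇ ℝ => ∫ x, (g x) ^ 2 ∂μ) :=
    (bcf_integral_continuous μ).comp (continuous_pow 2)
  have hFclosed : IsClosed F := by
    have a1 : IsClosed {g : X →ᵇ ℝ | ∀ x, g x ∈ Set.Icc (0:ℝ) 1} := by
      simp only [Set.ofPred_forall]
      exact isClosed_iInter fun x => isClosed_Icc.preimage (ev x)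
    have a2 : IsClosed {g : X →ᵇ ℝ | ∀ x y, |g x - g y| ≤ L * dist x y} := by
      simp only [Set.ofPred_forall]
      exact isClosed_iInter fun x => isClosed_iInter fun y =>
        isClosed_le (((ev x).sub (ev y)).abs) continuous_const
    exact a1.inter (a2.inter ((isClosed_eq c1 continuous_const).inter
      ((isClosed_eq c2 continuous_const).inter (isClosed_le continuous_const (QQ_continuous τ)))))
  have hFcompact : IsCompact F := by
    refine arzela_ascoli₂ (Set.Icc (0:ℝ) 1) isCompact_Icc F hFclosed (fun g x hg => hg.1 x) ?_
    refine Metric.equicontinuous_of_continuity_modulus (fun t => L * t) ?_ _ ?_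
    · have : Continuous (fun t : ℝ => L * t) := by fun_prop
      simpa using this.tendsto 0
    · intro x y g
      rw [Real.dist_eq]
      exact g.2.2.1 x y
  have cJ : Continuous (fun g : X →ᵇ ℝ => ∫ x, g x * l x ∂μ) := by
    let lb : X →ᵇ ℝ := mkOfCompact ⟨l, hl⟩
    exact (bcf_integral_continuous μ).comp (continuous_id.mul (continuous_const (y := lb)))
  obtain ⟨g, hgF, hgmax⟩ := hFcompact.exists_isMaxOn ⟨f, hf, hLip, rfl, rfl, le_rfl⟩ cJ.continuousOn
  refine ⟨g, hgF.1, hgF.2.2.1, hgF.2.2.2.1, hgF.2.2.2.2, ?_⟩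
  intro x y hxy
  obtain ⟨P, hPx, hH⟩ := hpol x y hxy
  have hlip := P.pol_lip g L hL hgF.2.1
  have hcont : Continuous (P.pol g) := by
    refine (LipschitzWith.of_dist_le_mul (K := L.toNNReal) fun x y => ?_).continuous
    rw [Real.coe_toNNReal _ hL, Real.dist_eq]
    exact hlip x y
  have hσ : Continuous P.σ := (Isometry.of_dist_eq P.iso).continuous
  have hm : ∀ x, P.pol g x ∈ Set.Icc (0:ℝ) 1 := fun x => P.pol_mem g x _ hgF.1
  have int : ∀ g : X → ℝ, Continuous g → Integrable g μ := fun g hg =>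
    hg.integrable_of_hasCompactSupport (HasCompactSupport.of_compactSpace g)
  let pg : X →ᵇ ℝ := mkOfCompact ⟨P.pol g, hcont⟩
  have hpg : pg ∈ F := by
    refine ⟨hm, hlip, ?_, ?_, ?_⟩
    · rw [← hgF.2.2.1]
      exact P.integral_pol g id (int _ g.continuous) (int _ hcont)
    · rw [← hgF.2.2.2.1]
      exact P.integral_pol g (fun t => t ^ 2) (int _ (g.continuous.pow 2)) (int _ (hcont.pow 2))
    · refine hgF.2.2.2.2.trans ?_
      exact P.I_le τ g (QQ_int τ _ g.continuous.measurable hgF.1) (QQ_int τ _ hcont.measurable hm)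
  have := hgmax hpg
  rw [← hPx]
  exact P.J_fix hl g g.continuous hcont hσ this x hH

lemma QQ_close [SecondCountableTopology X] [BorelSpace X] [IsProbabilityMeasure μ] (τ : ℝ) (f h : X → ℝ)
    (fm : Measurable f) (hm : Measurable h) (hf : ∀ x, f x ∈ Set.Icc (0:ℝ) 1)
    (hh : ∀ x, h x ∈ Set.Icc (0:ℝ) 1) :
    ∫ z, QQ τ f z ∂(μ.prod μ) ≤ ∫ z, QQ τ h z ∂(μ.prod μ) + 2 * ∫ x, |f x - h x| ∂μ := by
  have ia : Integrable (fun x => |f x - h x|) μ := by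
    refine Integrable.of_bound (by fun_prop) 1 (.of_forall fun x => ?_)
    have := hf x
    have := hh x
    simp only [Set.mem_Icc] at *
    rw [Real.norm_eq_abs, abs_abs, abs_le]
    constructor <;> linarith
  have e1 : ∫ z : X × X, |f z.1 - h z.1| ∂(μ.prod μ) = ∫ x, |f x - h x| ∂μ := by
    rw [integral_fun_fst (fun x => |f x - h x|)]; simp
  have e2 : ∫ z : X × X, |f z.2 - h z.2| ∂(μ.prod μ) = ∫ x, |f x - h x| ∂μ := by
    rw [integral_fun_snd (fun x => |f x - h x|)]; simp
  have i1 : Integrable (fun z : X × X => |f z.1 - h z.1|) (μ.prod μ) := ia.comp_fst μ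
  have i2 : Integrable (fun z : X × X => |f z.2 - h z.2|) (μ.prod μ) := ia.comp_snd μ
  have i3 : Integrable (fun z : X × X => |f z.1 - h z.1| + |f z.2 - h z.2|) (μ.prod μ) := i1.add i2
  have : 2 * ∫ x, |f x - h x| ∂μ = ∫ z : X × X, (|f z.1 - h z.1| + |f z.2 - h z.2|) ∂(μ.prod μ) := by
    rw [integral_add i1 i2, e1, e2]; ring
  rw [this, ← integral_add (QQ_int τ h hm hh) i3]
  refine integral_mono (QQ_int τ f fm hf) ((QQ_int τ h hm hh).add i3) fun z => ?_
  have a1 := hf z.1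
  have a2 := hf z.2
  have b1 := hh z.1
  have b2 := hh z.2
  simp only [Set.mem_Icc] at *
  have c1 := abs_nonneg (f z.1 - h z.1)
  have c2 := abs_nonneg (f z.2 - h z.2)
  have d1 := le_abs_self (f z.1 - h z.1)
  have d2 := le_abs_self (f z.2 - h z.2)
  simp only [QQ, kern]
  split_ifs
  · nlinarith
  · linarith

end Rearr

section RearrSet

open BoundedContinuousFunction

def collSet {X : Type} [MetricSpace X] (τ : ℝ) (A : Set X) : Set (X × X) :=
  {uv | uv.2 ∈ A ∧ uv.1 ∈ A ∧ dist uv.1 uv.2 ≤ τ}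

lemma collSet_meas {X : Type} [MetricSpace X] [MeasurableSpace X] [SecondCountableTopology X]
    [BorelSpace X] (τ : ℝ) (A : Set X) (hA : MeasurableSet A) : MeasurableSet (collSet τ A) :=
  (measurable_snd hA).inter ((measurable_fst hA).inter (kern_set_meas τ))

lemma QQ_set {X : Type} [MetricSpace X] [MeasurableSpace X] [SecondCountableTopology X]
    [BorelSpace X] (μ : Measure X) [IsProbabilityMeasure μ] (τ : ℝ) (A : Set X)
    (hA : MeasurableSet A) :
    ∫ z, QQ τ (A.indicator (fun _ => (1:ℝ))) z ∂(μ.prod μ) = (μ.prod μ).real (collSet τ A) := by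
  rw [← integral_indicator_one (collSet_meas τ A hA)]
  congr 1
  ext z
  by_cases h1 : z.1 ∈ A <;> by_cases h2 : z.2 ∈ A <;> by_cases h3 : dist z.1 z.2 ≤ τ <;>
    simp [QQ, kern, collSet, Set.indicator, h1, h2, h3]

lemma lip_approx {X : Type} [MetricSpace X] [MeasurableSpace X] [CompactSpace X]
    [BorelSpace X] (μ : Measure X) [IsProbabilityMeasure μ] (A : Set X)
    (hA : MeasurableSet A) (δ : ℝ) (hδ : 0 < δ) :
    ∃ (f : X →ᵇ ℝ) (L : ℝ), 0 ≤ L ∧ (∀ x y, |f x - f y| ≤ L * dist x y) ∧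
      (∀ x, f x ∈ Set.Icc (0:ℝ) 1) ∧
      ∫ x, |f x - A.indicator (fun _ => (1:ℝ)) x| ∂μ ≤ δ := by
  have h2 : ENNReal.ofReal (δ / 2) ≠ 0 := by simpa using hδ
  obtain ⟨F, hFA, hFc, hF⟩ := hA.exists_isClosed_sdiff_lt (μ := μ) (measure_ne_top _ _) h2
  obtain ⟨U, hAU, hUo, _, hU⟩ := hA.exists_isOpen_sdiff_lt (μ := μ) (measure_ne_top _ _) h2
  obtain ⟨r, hr, hrU⟩ := hFc.isCompact.exists_thickening_subset_open hUo (hFA.trans hAU)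
  let g := thickenedIndicator hr F
  have hcont : Continuous (fun x => (g x : ℝ)) := by fun_prop
  have h01 : ∀ x, (g x : ℝ) ∈ Set.Icc (0:ℝ) 1 := fun x =>
    ⟨(g x).2, by exact_mod_cast thickenedIndicator_le_one hr F x⟩
  refine ⟨mkOfCompact ⟨fun x => (g x : ℝ), hcont⟩, ((r.toNNReal⁻¹ : NNReal) : ℝ), NNReal.coe_nonneg _,
    ?_, h01, ?_⟩
  · intro x y
    have := (lipschitzWith_thickenedIndicator hr F).dist_le_mul x y
    rwa [NNReal.dist_eq] at this
  · have hUF : MeasurableSet (U \ F) := hUo.measurableSet.diff hFc.measurableSet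
    have hle : ∀ x, |(g x : ℝ) - A.indicator (fun _ => (1:ℝ)) x| ≤ (U \ F).indicator (fun _ => (1:ℝ)) x := by
      intro x
      by_cases hxF : x ∈ F
      · have : g x = 1 := thickenedIndicator_one hr F hxF
        simp [this, hFA hxF, hxF]
      · by_cases hxU : x ∈ U
        · have hmem : x ∈ U \ F := ⟨hxU, hxF⟩
          rw [Set.indicator_of_mem hmem]
          have := h01 x
          simp only [Set.mem_Icc] at this
          by_cases hxA : x ∈ A
          · simp only [hxA, Set.indicator_of_mem]
            rw [abs_le]; constructor <;> linarith
          · simp only [hxA, not_false_eq_true, Set.indicator_of_notMem]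
            rw [abs_le]; constructor <;> linarith
        · have : g x = 0 := thickenedIndicator_zero hr F (fun h => hxU (hrU h))
          have hxA : x ∉ A := fun h => hxU (hAU h)
          simp [this, hxA, hxU]
    have : ∫ x, |(g x : ℝ) - A.indicator (fun _ => (1:ℝ)) x| ∂μ ≤ μ.real (U \ F) := by
      rw [← integral_indicator_one hUF]
      refine integral_mono_of_nonneg (.of_forall fun x => abs_nonneg _) ?_ (.of_forall hle)
      exact (integrable_const (1:ℝ)).indicator hUF
    refine this.trans ?_
    have hsub : U \ F ⊆ (A \ F) ∪ (U \ A) := by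
      intro x hx
      by_cases h : x ∈ A
      · exact Or.inl ⟨h, hx.2⟩
      · exact Or.inr ⟨hx.1, h⟩
    have e1 : μ.real (A \ F) ≤ δ / 2 := ENNReal.toReal_le_of_le_ofReal (by linarith) hF.le
    have e2 : μ.real (U \ A) ≤ δ / 2 := ENNReal.toReal_le_of_le_ofReal (by linarith) hU.le
    have e3 := measureReal_union_le (μ := μ) (A \ F) (U \ A)
    have e4 := measureReal_mono (μ := μ) hsub
    linarith

theorem rearr_set {X : Type} [MetricSpace X] [MeasurableSpace X] {μ : Measure X} {l : X → ℝ}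
    [CompactSpace X] [BorelSpace X] [IsProbabilityMeasure μ] [μ.IsOpenPosMeasure]
    (hl : Continuous l) (hpol : ∀ x y, l y < l x → ∃ P : Pol μ l, P.σ x = y ∧ 0 < P.H x)
    (τ : ℝ) (A : Set X) (hA : MeasurableSet A) (δ : ℝ) (hδ : 0 < δ) :
    ∃ t : ℝ, (∀ t' > t, μ.real {x | t' ≤ l x} ≤ μ.real A + δ) ∧
      μ.real A ≤ μ.real {x | t ≤ l x} + δ ∧
      (μ.prod μ).real (collSet τ A) ≤ (μ.prod μ).real (collSet τ {x | t ≤ l x}) + δ := by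
  obtain ⟨f, L, hL, hLip, hf, hfA⟩ := lip_approx μ A hA (δ / 6) (by positivity)
  obtain ⟨g, hg, hg1, hg2, hgI, hgmono⟩ := rearr hl hpol τ f L hL hLip hf
  have int : ∀ g : X → ℝ, Continuous g → Integrable g μ := fun g hg =>
    hg.integrable_of_hasCompactSupport (HasCompactSupport.of_compactSpace g)
  let B : Set X := {x | 1 / 2 ≤ g x}
  have hBm : MeasurableSet B := (isClosed_le continuous_const g.continuous).measurableSet
  have indm : ∀ A : Set X, MeasurableSet A → Measurable (A.indicator (fun _ => (1:ℝ))) := fun A hA =>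
    measurable_const.indicator hA
  have ind01 : ∀ (A : Set X) x, A.indicator (fun _ => (1:ℝ)) x ∈ Set.Icc (0:ℝ) 1 := by
    intro A x
    by_cases h : x ∈ A <;> simp [h]
  have indi : ∀ A : Set X, MeasurableSet A → Integrable (A.indicator (fun _ => (1:ℝ))) μ := fun A hA =>
    (integrable_const (1:ℝ)).indicator hA
  have indI : ∀ A : Set X, MeasurableSet A → ∫ x, A.indicator (fun _ => (1:ℝ)) x ∂μ = μ.real A :=
    fun A hA => integral_indicator_one hA
  -- closeness of g to indicator of B
  have i1 : Integrable (fun x => f x - f x ^ 2) μ := int _ (by fun_prop)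
  have i2 : Integrable (fun x => g x - g x ^ 2) μ := int _ (by fun_prop)
  have iA : Integrable (fun x => |f x - A.indicator (fun _ => (1:ℝ)) x|) μ :=
    ((int _ f.continuous).sub (indi A hA)).abs
  have iB : Integrable (fun x => |g x - B.indicator (fun _ => (1:ℝ)) x|) μ :=
    ((int _ g.continuous).sub (indi B hBm)).abs
  have s1 : ∫ x, (f x - f x ^ 2) ∂μ ≤ δ / 6 := by
    refine (integral_mono i1 iA fun x => ?_).trans hfA
    have := hf x
    simp only [Set.mem_Icc] at this
    by_cases h : x ∈ A
    · simp only [h, Set.indicator_of_mem]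
      rw [abs_sub_comm]
      refine le_trans ?_ (le_abs_self _)
      nlinarith
    · simp only [h, not_false_eq_true, Set.indicator_of_notMem]
      refine le_trans ?_ (le_abs_self _)
      nlinarith
  have s2 : ∫ x, (g x - g x ^ 2) ∂μ ≤ δ / 6 := by
    rw [integral_sub (int _ (by fun_prop)) (int _ (by fun_prop))] at s1 ⊢
    rw [hg1, hg2]
    exact s1
  have s3 : ∫ x, |g x - B.indicator (fun _ => (1:ℝ)) x| ∂μ ≤ 2 * (δ / 6) := by
    refine le_trans ?_ (mul_le_mul_of_nonneg_left s2 (by norm_num))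
    rw [← integral_const_mul]
    refine integral_mono iB (i2.const_mul 2) fun x => ?_
    have := hg x
    simp only [Set.mem_Icc] at this
    by_cases h : x ∈ B
    · simp only [h, Set.indicator_of_mem]
      have h' : 1 / 2 ≤ g x := h
      rw [abs_le]; constructor <;> nlinarith
    · simp only [h, not_false_eq_true, Set.indicator_of_notMem]
      have h' : g x < 1 / 2 := not_le.1 h
      rw [abs_le]; constructor <;> nlinarith
  have m1 : |∫ x, f x ∂μ - μ.real A| ≤ δ / 6 := by
    rw [← indI A hA, ← integral_sub (int _ f.continuous) (indi A hA)]
    exact (abs_integral_le_integral_abs).trans hfA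
  have m2 : |∫ x, g x ∂μ - μ.real B| ≤ 2 * (δ / 6) := by
    rw [← indI B hBm, ← integral_sub (int _ g.continuous) (indi B hBm)]
    exact (abs_integral_le_integral_abs).trans s3
  rw [hg1] at m2
  rw [abs_le] at m1 m2
  have I1 := QQ_close (μ := μ) τ _ f (indm A hA) f.continuous.measurable (ind01 A) hf
  have I2 := QQ_close (μ := μ) τ g _ g.continuous.measurable (indm B hBm) hg (ind01 B)
  rw [QQ_set μ τ A hA] at I1
  rw [QQ_set μ τ B hBm] at I2
  simp_rw [abs_sub_comm (A.indicator _ _) _] at I1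
  -- the threshold
  obtain ⟨t, ht1, ht2⟩ : ∃ t : ℝ, (∀ t' > t, {x | t' ≤ l x} ⊆ B) ∧ B ⊆ {x | t ≤ l x} := by
    rcases B.eq_empty_or_nonempty with hB | hB
    · obtain ⟨M, hM⟩ := (isCompact_range hl).bddAbove
      refine ⟨M + 1, fun t' ht' x hx => ?_, by simp [hB]⟩
      have h1 := hM (Set.mem_range_self x)
      have h2 : t' ≤ l x := hx
      linarith
    · have hbd : BddBelow (l '' B) := (isCompact_range hl).bddBelow.mono (Set.image_subset_range _ _)
      refine ⟨sInf (l '' B), fun t' ht' x hx => ?_, fun x hx => csInf_le hbd ⟨x, hx, rfl⟩⟩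
      obtain ⟨_, ⟨y, hy, rfl⟩, hlt⟩ := exists_lt_of_csInf_lt (hB.image l) ht'
      have h2 : t' ≤ l x := hx
      exact le_trans (hy : 1 / 2 ≤ g y) (hgmono x y (by linarith))
  refine ⟨t, fun t' ht' => ?_, ?_, ?_⟩
  · have := measureReal_mono (μ := μ) (ht1 t' ht')
    linarith
  · have := measureReal_mono (μ := μ) ht2
    linarith
  · have hsub : collSet τ B ⊆ collSet τ {x | t ≤ l x} := fun z hz => ⟨ht2 hz.1, ht2 hz.2.1, hz.2.2⟩
    have := measureReal_mono (μ := μ.prod μ) hsub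
    linarith

end RearrSet

lemma refl'_formula {d : ℕ} (x y z : EE d) :
    refl' x y z = z - (2 * (inner ℝ (x - y) z / ‖x - y‖ ^ 2)) • (x - y) := by
  unfold refl'
  rw [Submodule.reflection_orthogonal_apply, Submodule.reflection_singleton_apply]
  simp only [neg_sub, RCLike.ofReal_real_eq_id, id_eq]
  rw [mul_smul, two_smul, two_smul]

lemma dist_sq' {d : ℕ} (u v : SS d) : dist u v ^ 2 = 2 - 2 * inner ℝ (u : EE d) (v : EE d) := by
  have h1 : ‖(u : EE d)‖ = 1 := by simp
  have h2 : ‖(v : EE d)‖ = 1 := by simp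
  rw [Subtype.dist_eq, dist_eq_norm, norm_sub_sq_real, h1, h2]
  ring

lemma sphere_pol {d : ℕ} (e : EE d) (x y : SS d)
    (h : inner ℝ e (y : EE d) < inner ℝ e (x : EE d)) :
    ∃ P : Pol (sphereMeasure d) (fun v : SS d => inner ℝ e (v : EE d)), P.σ x = y ∧ 0 < P.H x := by
  have hxy : (x : EE d) - y ≠ 0 := by
    intro h0
    rw [sub_eq_zero] at h0
    rw [h0] at h
    exact lt_irrefl _ h
  have hpos : 0 < ‖(x : EE d) - y‖ ^ 2 := by positivity
  have nx : ‖(x : EE d)‖ = 1 := by simp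
  have ny : ‖(y : EE d)‖ = 1 := by simp
  refine ⟨{ σ := rot (refl' x y), H := fun z => inner ℝ ((x : EE d) - y) (z : EE d), inv := ?_, iso := ?_,
            mp := rot_mp _, Hc := by fun_prop, Hσ := ?_, fix := ?_, near := ?_, up := ?_ }, ?_, ?_⟩
  · intro z; ext1; simp [refl'_refl']
  · intro z w; rw [Subtype.dist_eq, Subtype.dist_eq]; simp
  · intro z
    simp only [rot_coe]
    rw [refl'_formula, inner_sub_right, inner_smul_right, real_inner_self_eq_norm_sq]
    field_simp
    ring
  · intro z hz
    ext1
    simp only [rot_coe]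
    rw [refl'_formula, hz]
    simp
  · intro z w hz hw
    refine (sq_le_sq₀ dist_nonneg dist_nonneg).1 ?_
    rw [dist_sq', dist_sq', rot_coe, refl'_formula, inner_sub_right, inner_smul_right,
      real_inner_comm ((x : EE d) - y) (z : EE d)]
    have : 0 ≤ 2 * (inner ℝ ((x : EE d) - y) (w : EE d) / ‖(x : EE d) - y‖ ^ 2) *
      inner ℝ ((x : EE d) - y) (z : EE d) := by positivity
    linarith
  · intro z hz
    rw [rot_coe, refl'_formula, inner_sub_right, inner_smul_right]
    have h1 : 0 < inner ℝ e ((x : EE d) - y) := by rw [inner_sub_right]; linarith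
    have : 0 < 2 * (inner ℝ ((x : EE d) - y) (z : EE d) / ‖(x : EE d) - y‖ ^ 2) *
      inner ℝ e ((x : EE d) - y) := by positivity
    linarith
  · ext1
    simp only [rot_coe]
    exact refl'_apply (by rw [nx, ny])
  · have : ‖(x : EE d) - y‖ ^ 2 = 2 * inner ℝ ((x : EE d) - y) (x : EE d) := by
      rw [norm_sub_sq_real, inner_sub_left, real_inner_self_eq_norm_sq, real_inner_comm, nx, ny]
      ring
    simp only
    linarith

theorem sphere_rearr {d : ℕ} [NeZero d] (e : EE d) (τ : ℝ) (A : Set (SS d)) (hA : MeasurableSet A)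
    (δ : ℝ) (hδ : 0 < δ) :
    ∃ t : ℝ, (∀ t' > t, (sphereMeasure d).real {x : SS d | t' ≤ inner ℝ e (x : EE d)} ≤
        (sphereMeasure d).real A + δ) ∧
      (sphereMeasure d).real A ≤ (sphereMeasure d).real {x : SS d | t ≤ inner ℝ e (x : EE d)} + δ ∧
      ((sphereMeasure d).prod (sphereMeasure d)).real (collSet τ A) ≤
        ((sphereMeasure d).prod (sphereMeasure d)).real
          (collSet τ {x : SS d | t ≤ inner ℝ e (x : EE d)}) + δ :=
  rearr_set (inner_meas e) (sphere_pol e) τ A hA δ hδ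


section Concentration

lemma capm_pos {d : ℕ} [NeZero d] {a : ℝ} (ha : a < 1) : 0 < capm d a := by
  have hn := e0_norm d
  have hopen : IsOpen {v : SS d | a < inner ℝ (EuclideanSpace.single (0 : Fin d) (1:ℝ)) (v : EE d)} :=
    isOpen_lt continuous_const (inner_meas _)
  have hne : {v : SS d | a < inner ℝ (EuclideanSpace.single (0 : Fin d) (1:ℝ)) (v : EE d)}.Nonempty := by
    refine ⟨⟨EuclideanSpace.single (0 : Fin d) (1:ℝ), by simp⟩, ?_⟩
    show a < _
    rw [real_inner_self_eq_norm_sq, hn]; simpa using ha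
  have h1 := hopen.measure_pos (sphereMeasure d) hne
  have h2 : 0 < (sphereMeasure d).real
      {v : SS d | a < inner ℝ (EuclideanSpace.single (0 : Fin d) (1:ℝ)) (v : EE d)} :=
    ENNReal.toReal_pos h1.ne' (measure_ne_top _ _)
  refine h2.trans_le (measureReal_mono ?_)
  intro v hv
  have hv' : a < inner ℝ (EuclideanSpace.single (0 : Fin d) (1:ℝ)) (v : EE d) := hv
  exact hv'.le

lemma inner_e0 {d : ℕ} [NeZero d] (x : EE d) :
    inner ℝ (EuclideanSpace.single (0 : Fin d) (1:ℝ)) x = x 0 := by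
  rw [EuclideanSpace.inner_single_left]; simp

/-- diagonal map -/
def diagMap {d : ℕ} (D : Fin d → ℝ) : EE d →ₗ[ℝ] EE d where
  toFun x := WithLp.toLp 2 (fun i => D i * x i)
  map_add' x y := by ext i; simp [mul_add]
  map_smul' c x := by ext i; simp; ring

lemma diagMap_det {d : ℕ} (D : Fin d → ℝ) : LinearMap.det (diagMap D) = ∏ i, D i := by
  rw [← LinearMap.det_toMatrix (EuclideanSpace.basisFun (Fin d) ℝ).toBasis]
  rw [← Matrix.det_diagonal]
  congr 1
  ext i j
  rw [LinearMap.toMatrix_apply]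
  simp [diagMap, Matrix.diagonal_apply]

open scoped Pointwise in
lemma capm_ratio {d : ℕ} [NeZero d] {a b : ℝ} (ha : 0 < a) (hab : a < b) (hb : b < 1) :
    (a / b) * (√((1 - a ^ 2) / (1 - b ^ 2))) ^ (d - 1) * capm d b ≤ capm d a := by
  set q := √((1 - a ^ 2) / (1 - b ^ 2)) with hq
  have hb0 : 0 < b := ha.trans hab
  have hb2 : 0 < 1 - b ^ 2 := by nlinarith
  have ha2 : 0 < 1 - a ^ 2 := by nlinarith
  have hq2 : q ^ 2 * (1 - b ^ 2) = 1 - a ^ 2 := by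
    rw [hq, Real.sq_sqrt (by positivity)]; field_simp
  have hq0 : 0 ≤ q := Real.sqrt_nonneg _
  let e : EE d := EuclideanSpace.single (0 : Fin d) (1:ℝ)
  let D : Fin d → ℝ := fun i => if i = 0 then a / b else q
  have hdet : LinearMap.det (diagMap D) = a / b * q ^ (d - 1) := by
    rw [diagMap_det, ← Finset.mul_prod_erase _ _ (Finset.mem_univ (0 : Fin d))]
    congr 1
    · rw [Finset.prod_congr rfl (g := fun _ => q)]
      · simp
      · intro i hi
        simp [D, (Finset.mem_erase.1 hi).1]
  let C : ℝ → Set (EE d) := fun s =>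
    Set.Ioo (0:ℝ) 1 • ((↑) '' {v : SS d | s ≤ inner ℝ e (v : EE d)} : Set (EE d))
  have hcap : ∀ s, capm d s = (((volume : Measure (EE d)).toSphere Set.univ)⁻¹ * (d : ENNReal)).toReal *
      (volume : Measure (EE d)).real (C s) := by
    intro s
    unfold capm
    have hs : MeasurableSet {v : SS d | s ≤ inner ℝ e (v : EE d)} :=
      (isClosed_le continuous_const (inner_meas _)).measurableSet
    have h1 := (volume : Measure (EE d)).toSphere_apply' hs
    rw [measureReal_def, sphereMeasure, Measure.smul_apply, smul_eq_mul]
    change (((volume : Measure (EE d)).toSphere Set.univ)⁻¹ *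
      (volume : Measure (EE d)).toSphere {v : SS d | s ≤ inner ℝ e (v : EE d)}).toReal = _
    rw [h1, ← mul_assoc, ENNReal.toReal_mul]
    simp [measureReal_def, C]
  have hsub : diagMap D '' C b ⊆ C a := by
    rintro _ ⟨_, ⟨r, hr, _, ⟨v, hv, rfl⟩, rfl⟩, rfl⟩
    have hv' : b ≤ (v : EE d) 0 := by
      have : b ≤ inner ℝ e (v : EE d) := hv
      rwa [inner_e0] at this
    have hv1 : ‖(v : EE d)‖ ^ 2 = 1 := by simp
    set y := diagMap D (v : EE d) with hy
    have y0 : y 0 = a / b * (v : EE d) 0 := by simp [hy, diagMap, D]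
    have ynorm : ‖y‖ ^ 2 = (a / b) ^ 2 * ((v : EE d) 0) ^ 2 + q ^ 2 * (1 - ((v : EE d) 0) ^ 2) := by
      rw [← hv1, EuclideanSpace.real_norm_sq_eq, EuclideanSpace.real_norm_sq_eq,
        ← Finset.add_sum_erase _ _ (Finset.mem_univ (0 : Fin d)),
        ← Finset.add_sum_erase _ (fun i => (v : EE d) i ^ 2) (Finset.mem_univ (0 : Fin d)), y0,
        add_sub_cancel_left, Finset.mul_sum, mul_pow]
      congr 1
      refine Finset.sum_congr rfl fun i hi => ?_
      simp [hy, diagMap, D, (Finset.mem_erase.1 hi).1, mul_pow]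
    have y0pos : 0 < y 0 := by rw [y0]; have := hb0.trans_le hv'; positivity
    have hyne : y ≠ 0 := fun h => by rw [h] at y0pos; simp at y0pos
    have hyn : 0 < ‖y‖ := norm_pos_iff.2 hyne
    have hp2 : b ^ 2 ≤ ((v : EE d) 0) ^ 2 := by nlinarith
    have hab' : (a / b) ^ 2 * b ^ 2 = a ^ 2 := by field_simp
    have c1 : ‖y‖ ≤ 1 := by
      have hk : (a / b) ^ 2 ≤ q ^ 2 := by
        have h1 : (a / b) ^ 2 ≤ 1 := by
          rw [div_pow, div_le_one (by positivity)]; nlinarith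
        have h2 : 1 ≤ q ^ 2 := by nlinarith
        linarith
      have : ‖y‖ ^ 2 ≤ 1 := by
        rw [ynorm]
        nlinarith [mul_nonneg (sub_nonneg.2 hk) (sub_nonneg.2 hp2)]
      nlinarith
    have c2 : a * ‖y‖ ≤ y 0 := by
      refine (sq_le_sq₀ (by positivity) y0pos.le).1 ?_
      rw [mul_pow, ynorm, y0, mul_pow]
      have : a ^ 2 / b ^ 2 * (v : EE d) 0 ^ 2 - a ^ 2 * (a ^ 2 / b ^ 2 * (v : EE d) 0 ^ 2 + q ^ 2 * (1 - (v : EE d) 0 ^ 2))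
        = a ^ 2 * ((1 - a ^ 2) * (v : EE d) 0 ^ 2 / b ^ 2 - q ^ 2 * (1 - (v : EE d) 0 ^ 2)) := by ring
      have h3 : 0 ≤ (1 - a ^ 2) * (v : EE d) 0 ^ 2 / b ^ 2 - q ^ 2 * (1 - (v : EE d) 0 ^ 2) := by
        rw [← hq2]
        have : q ^ 2 * (1 - b ^ 2) * (v : EE d) 0 ^ 2 / b ^ 2 - q ^ 2 * (1 - (v : EE d) 0 ^ 2)
          = q ^ 2 * (((v : EE d) 0) ^ 2 - b ^ 2) / b ^ 2 := by field_simp; ring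
        rw [this]
        have := sub_nonneg.2 hp2
        positivity
      rw [div_pow]
      nlinarith [mul_nonneg (sq_nonneg a) h3]
    have hr1 := hr.1
    have hr2 := hr.2
    refine ⟨r * ‖y‖, ⟨by positivity, by nlinarith⟩, ‖y‖⁻¹ • y,
      ⟨⟨‖y‖⁻¹ • y, by simp [norm_smul, hyne]⟩, ?_, rfl⟩, ?_⟩
    · show a ≤ inner ℝ e (‖y‖⁻¹ • y)
      rw [inner_smul_right]
      have : inner ℝ e y = y 0 := inner_e0 y
      rw [this, inv_mul_eq_div, le_div_iff₀ hyn]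
      exact c2
    · simp only [map_smul]
      rw [smul_smul, mul_assoc, mul_inv_cancel₀ hyn.ne', mul_one]
  have hvol : (volume : Measure (EE d)) (C a) ≠ ⊤ := by
    refine ne_top_of_le_ne_top (measure_ball_lt_top (x := (0 : EE d)) (r := 1)).ne (measure_mono ?_)
    rintro _ ⟨r, hr, _, ⟨v, hv, rfl⟩, rfl⟩
    simp [norm_smul, abs_of_pos hr.1, hr.2]
  have hmain : a / b * q ^ (d - 1) * (volume : Measure (EE d)).real (C b) ≤
      (volume : Measure (EE d)).real (C a) := by
    have h1 := ENNReal.toReal_mono hvol (measure_mono (μ := (volume : Measure (EE d))) hsub)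
    rw [Measure.addHaar_image_linearMap, hdet, ENNReal.toReal_mul, ENNReal.toReal_ofReal (abs_nonneg _),
      abs_of_nonneg (by positivity)] at h1
    exact h1
  rw [hcap a, hcap b]
  have := mul_le_mul_of_nonneg_left hmain
    (ENNReal.toReal_nonneg (a := ((volume : Measure (EE d)).toSphere Set.univ)⁻¹ * (d : ENNReal)))
  linarith

lemma capm_conc {a b : ℝ} (ha : 0 < a) (hab : a < b) (hb : b < 1) (ε : ℝ) (hε : 0 < ε) :
    ∃ d₀ : ℕ, ∀ d : ℕ, d₀ ≤ d → ∀ [NeZero d], capm d b ≤ ε * capm d a := by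
  set q := √((1 - a ^ 2) / (1 - b ^ 2)) with hq
  have hb0 : 0 < b := ha.trans hab
  have hb2 : 0 < 1 - b ^ 2 := by nlinarith
  have hq1 : 1 < q := by
    rw [hq, Real.lt_sqrt (by norm_num), lt_div_iff₀ hb2]; nlinarith
  obtain ⟨n, hn⟩ := pow_unbounded_of_one_lt (b / a / ε) hq1
  refine ⟨n + 1, fun d hd _ => ?_⟩
  have h1 := capm_ratio (d := d) ha hab hb
  rw [← hq] at h1
  have h2 : q ^ n ≤ q ^ (d - 1) := pow_le_pow_right₀ hq1.le (by omega)
  have h3 : 0 ≤ capm d b := measureReal_nonneg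
  have h4 : 1 ≤ ε * (a / b * q ^ (d - 1)) := by
    have : b / a / ε ≤ q ^ (d - 1) := hn.le.trans h2
    calc 1 = ε * (a / b * (b / a / ε)) := by field_simp
      _ ≤ _ := by gcongr
  nlinarith

end Concentration

section GaussBasics

/-- standard Gaussian on the line -/
abbrev gam : Measure ℝ := gaussianReal 0 1

lemma gam_charFunDual (L : StrongDual ℝ ℝ) :
    charFunDual gam L = Complex.exp (-((L 1 : ℝ) : ℂ) ^ 2 / 2) := by
  have h := charFun_gaussianReal (μ := 0) (v := 1) (L 1)
  have h2 : charFunDual gam L = charFun gam (L 1) := by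
    rw [charFunDual_apply, charFun_apply_real]
    congr 1
    ext x
    congr 2
    have : L x = L 1 * x := by
      conv_lhs => rw [show x = x • (1:ℝ) by simp]
      rw [map_smul, smul_eq_mul, mul_comm]
    rw [this]; push_cast; ring
  rw [h2, h]
  congr 1
  simp
  ring

/-- the linear map on the plane -/
def planeMap (s : ℝ) : ℝ × ℝ →L[ℝ] ℝ × ℝ :=
  (ContinuousLinearMap.fst ℝ ℝ ℝ).prod
    (s • ContinuousLinearMap.fst ℝ ℝ ℝ + √(1 - s ^ 2) • ContinuousLinearMap.snd ℝ ℝ ℝ)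

lemma planeMap_apply (s : ℝ) (z : ℝ × ℝ) :
    planeMap s z = (z.1, s * z.1 + √(1 - s ^ 2) * z.2) := by
  simp [planeMap]

lemma joint_law {d : ℕ} {u v : EE d} (hu : ‖u‖ = 1) (hv : ‖v‖ = 1) :
    (stdGaussian (EE d)).map (fun g => (inner ℝ u g, inner ℝ v g)) =
      (gam.prod gam).map (planeMap (inner ℝ u v)) := by
  set s := inner ℝ u v with hs
  have hs1 : s ^ 2 ≤ 1 := by
    have := abs_real_inner_le_norm u v
    rw [hu, hv, mul_one, ← hs] at this
    exact (sq_le_one_iff_abs_le_one s).2 this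
  let T : EE d →L[ℝ] ℝ × ℝ := (innerSL ℝ u).prod (innerSL ℝ v)
  have hT : (fun g : EE d => (inner ℝ u g, inner ℝ v g)) = T := by
    ext g <;> simp [T]
  rw [hT]
  have : IsProbabilityMeasure ((stdGaussian (EE d)).map T) :=
    Measure.isProbabilityMeasure_map T.continuous.measurable.aemeasurable
  have : IsProbabilityMeasure ((gam.prod gam).map (planeMap s)) :=
    Measure.isProbabilityMeasure_map (planeMap s).continuous.measurable.aemeasurable
  refine Measure.ext_of_charFunDual ?_
  ext L
  rw [charFunDual_map, charFunDual_map, charFunDual_prod, gam_charFunDual, gam_charFunDual,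
    charFunDual_stdGaussian, ← Complex.exp_add]
  congr 1
  set a := L (1, 0) with ha
  set b := L (0, 1) with hb
  have hL : ∀ x y : ℝ, L (x, y) = x * a + y * b := by
    intro x y
    have : ((x, y) : ℝ × ℝ) = x • ((1:ℝ), (0:ℝ)) + y • ((0:ℝ), (1:ℝ)) := by simp
    rw [this, map_add, map_smul, map_smul]; simp [ha, hb]
  have hLT : L ∘SL T = innerSL ℝ (a • u + b • v) := by
    ext g
    simp [T, hL]; ring
  have hn : ‖L ∘SL T‖ ^ 2 = a ^ 2 + 2 * a * b * s + b ^ 2 := by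
    rw [hLT, innerSL_apply_norm, ← real_inner_self_eq_norm_sq, inner_add_left, inner_add_right,
      inner_add_right]
    simp only [inner_smul_left, inner_smul_right, real_inner_self_eq_norm_sq, hu, hv,
      real_inner_comm u v]
    rw [← hs]; simp; ring
  have h1 : (L ∘SL planeMap s ∘SL ContinuousLinearMap.inl ℝ ℝ ℝ) 1 = a + s * b := by
    simp [planeMap_apply, hL]
  have h2 : (L ∘SL planeMap s ∘SL ContinuousLinearMap.inr ℝ ℝ ℝ) 1 = √(1 - s ^ 2) * b := by
    simp [planeMap_apply, hL]
  change -((‖L ∘SL T‖ : ℝ) : ℂ) ^ 2 / 2 =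
    -(((L ∘SL planeMap s ∘SL ContinuousLinearMap.inl ℝ ℝ ℝ) 1 : ℝ) : ℂ) ^ 2 / 2 +
    -(((L ∘SL planeMap s ∘SL ContinuousLinearMap.inr ℝ ℝ ℝ) 1 : ℝ) : ℂ) ^ 2 / 2
  rw [h1, h2]
  norm_cast
  rw [hn]
  have h3 := Real.sq_sqrt (sub_nonneg.2 hs1)
  norm_cast
  rw [mul_pow, h3]
  ring

lemma plane_snd {s : ℝ} (hs : s ^ 2 ≤ 1) :
    (gam.prod gam).map (fun z : ℝ × ℝ => s * z.1 + √(1 - s ^ 2) * z.2) = gam := by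
  let T : ℝ × ℝ →L[ℝ] ℝ :=
    s • ContinuousLinearMap.fst ℝ ℝ ℝ + √(1 - s ^ 2) • ContinuousLinearMap.snd ℝ ℝ ℝ
  have hT : (fun z : ℝ × ℝ => s * z.1 + √(1 - s ^ 2) * z.2) = T := by ext z; simp [T]
  rw [hT]
  have : IsProbabilityMeasure ((gam.prod gam).map T) :=
    Measure.isProbabilityMeasure_map T.continuous.measurable.aemeasurable
  refine Measure.ext_of_charFunDual ?_
  ext L
  rw [charFunDual_map, charFunDual_prod, gam_charFunDual, gam_charFunDual, gam_charFunDual,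
    ← Complex.exp_add]
  congr 1
  have hL : ∀ x : ℝ, L x = x * L 1 := by
    intro x
    conv_lhs => rw [show x = x • (1:ℝ) by simp]
    rw [map_smul, smul_eq_mul]
  have h1 : (L ∘SL T ∘SL ContinuousLinearMap.inl ℝ ℝ ℝ) 1 = s * L 1 := by
    simp [T]
  have h2 : (L ∘SL T ∘SL ContinuousLinearMap.inr ℝ ℝ ℝ) 1 = √(1 - s ^ 2) * L 1 := by
    simp [T]
  change -(((L ∘SL T ∘SL ContinuousLinearMap.inl ℝ ℝ ℝ) 1 : ℝ) : ℂ) ^ 2 / 2 +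
    -(((L ∘SL T ∘SL ContinuousLinearMap.inr ℝ ℝ ℝ) 1 : ℝ) : ℂ) ^ 2 / 2 = _
  rw [h1, h2]
  have h3 := Real.sq_sqrt (sub_nonneg.2 hs)
  norm_cast
  rw [mul_pow, mul_pow, h3]
  ring

lemma inner_law {d : ℕ} {u : EE d} (hu : ‖u‖ = 1) :
    (stdGaussian (EE d)).map (fun g => inner ℝ u g) = gam := by
  have h := congrArg (Measure.map Prod.fst) (joint_law hu hu)
  rw [Measure.map_map measurable_fst (by fun_prop),
    Measure.map_map measurable_fst (planeMap _).continuous.measurable] at h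
  have h1 : (Prod.fst ∘ fun g : EE d => (inner ℝ u g, inner ℝ u g)) = fun g => inner ℝ u g := rfl
  have h2 : (Prod.fst ∘ planeMap (inner ℝ u u)) = Prod.fst := by
    ext z; simp [planeMap_apply]
  rw [h1, h2] at h
  rw [h]
  exact measurePreserving_fst.map_eq

lemma gam_Icc (a b : ℝ) (hab : a ≤ b) : gam.real (Set.Icc a b) ≤ b - a := by
  have h : gam (Set.Icc a b) ≤ ENNReal.ofReal (b - a) := by
    rw [gaussianReal_apply _ (by norm_num)]
    calc ∫⁻ x in Set.Icc a b, gaussianPDF 0 1 x ≤ ∫⁻ x in Set.Icc a b, 1 := by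
          refine lintegral_mono fun x => ?_
          unfold gaussianPDF gaussianPDFReal
          rw [← ENNReal.ofReal_one]
          refine ENNReal.ofReal_le_ofReal ?_
          have h1 : (√(2 * π * ((1 : NNReal) : ℝ)))⁻¹ ≤ 1 := by
            refine inv_le_one_of_one_le₀ (Real.one_le_sqrt.2 ?_)
            have := Real.pi_gt_three
            simp; linarith
          have h2 : rexp (-(x - 0) ^ 2 / (2 * ((1 : NNReal) : ℝ))) ≤ 1 := by
            rw [Real.exp_le_one_iff]
            have := sq_nonneg (x - 0)
            simp; nlinarith
          exact mul_le_one₀ h1 (Real.exp_pos _).le h2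
      _ = _ := by simp
  calc gam.real (Set.Icc a b) ≤ (ENNReal.ofReal (b - a)).toReal :=
        ENNReal.toReal_mono ENNReal.ofReal_ne_top h
    _ = b - a := ENNReal.toReal_ofReal (by linarith)

lemma gam_tail {M : ℝ} (hM : 0 < M) : gam.real {x | M ≤ |x|} ≤ 1 / M ^ 2 := by
  have h := meas_ge_le_variance_div_sq (μ := gam) (X := fun x => x) (memLp_id_gaussianReal 2) hM
  simp only [integral_id_gaussianReal, sub_zero, variance_fun_id_gaussianReal] at h
  calc gam.real {x | M ≤ |x|} ≤ (ENNReal.ofReal (((1 : NNReal) : ℝ) / M ^ 2)).toReal :=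
        ENNReal.toReal_mono ENNReal.ofReal_ne_top h
    _ = _ := by rw [ENNReal.toReal_ofReal (by positivity)]; simp

lemma key_symm {Ω : Type*} [MeasurableSpace Ω] (P : Measure Ω) [IsProbabilityMeasure P]
    {Z W : Ω → ℝ} (hZ : Measurable Z) (hlaw : P.map Z = gam) {κ α : ℝ} (hκ : 0 ≤ κ)
    (h : P.real {ω | κ < |W ω - Z ω|} ≤ α) (η : ℝ) :
    P.real (symmDiff {ω | η ≤ Z ω} {ω | η ≤ W ω}) ≤ α + 2 * κ := by
  have hsub : symmDiff {ω | η ≤ Z ω} {ω | η ≤ W ω} ⊆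
      {ω | κ < |W ω - Z ω|} ∪ Z ⁻¹' Set.Icc (η - κ) (η + κ) := by
    intro ω hω
    by_cases hk : κ < |W ω - Z ω|
    · exact Or.inl hk
    · right
      push Not at hk
      rw [abs_le] at hk
      rcases hω with ⟨h1, h2⟩ | ⟨h1, h2⟩
      · have h1' : η ≤ Z ω := h1
        have h2' : ¬ η ≤ W ω := h2
        push Not at h2'
        exact ⟨by linarith, by linarith⟩
      · have h1' : η ≤ W ω := h1
        have h2' : ¬ η ≤ Z ω := h2
        push Not at h2'
        exact ⟨by linarith, by linarith⟩
  have h2 : P.real (Z ⁻¹' Set.Icc (η - κ) (η + κ)) ≤ 2 * κ := by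
    rw [← map_measureReal_apply hZ measurableSet_Icc, hlaw]
    have := gam_Icc (η - κ) (η + κ) (by linarith)
    linarith
  calc _ ≤ _ := measureReal_mono hsub
    _ ≤ _ := measureReal_union_le _ _
    _ ≤ _ := add_le_add h h2

lemma inter_close {Ω : Type*} [MeasurableSpace Ω] (P : Measure Ω) [IsProbabilityMeasure P]
    (A A' B B' : Set Ω) :
    |P.real (A ∩ B) - P.real (A' ∩ B')| ≤ P.real (symmDiff A A') + P.real (symmDiff B B') := by
  have key : ∀ A A' B B' : Set Ω, P.real (A ∩ B) ≤
      P.real (A' ∩ B') + (P.real (symmDiff A A') + P.real (symmDiff B B')) := by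
    intro A A' B B'
    calc P.real (A ∩ B) ≤ P.real ((A' ∩ B') ∪ (symmDiff A A' ∪ symmDiff B B')) := by
          refine measureReal_mono ?_
          intro x hx
          by_cases h1 : x ∈ A'
          · by_cases h2 : x ∈ B'
            · exact Or.inl ⟨h1, h2⟩
            · exact Or.inr (Or.inr (Or.inl ⟨hx.2, h2⟩))
          · exact Or.inr (Or.inl (Or.inl ⟨hx.1, h1⟩))
      _ ≤ _ := (measureReal_union_le _ _).trans (by gcongr; exact measureReal_union_le _ _)
  rw [abs_le]
  have h1 := key A A' B B'
  have h2 := key A' A B' B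
  rw [symmDiff_comm A' A, symmDiff_comm B' B] at h2
  constructor <;> linarith

end GaussBasics

section NormConc

lemma gauss_ne_zero (d : ℕ) [NeZero d] : ∀ᵐ g ∂(stdGaussian (EE d)), g ≠ 0 := by
  have h := inner_law (e0_norm d)
  have h0 : gam {(0:ℝ)} = 0 := by
    have := nullSingletonClass_gaussianReal (μ := 0) (v := 1) (by norm_num)
    exact measure_singleton 0
  rw [← h, Measure.map_apply (by fun_prop) (measurableSet_singleton _)] at h0
  have h1 : ∀ᵐ g ∂(stdGaussian (EE d)),
      g ∉ (fun g => inner ℝ (EuclideanSpace.single (0 : Fin d) (1:ℝ)) g) ⁻¹' {(0:ℝ)} :=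
    measure_eq_zero_iff_ae_notMem.1 h0
  filter_upwards [h1] with g hg h
  apply hg
  rw [h]
  simp

lemma gam_sq_memLp : MemLp (fun x : ℝ => x ^ 2) 2 gam := by
  have h := memLp_id_gaussianReal (μ := 0) (v := 1) 4
  have h2 : MemLp (fun x : ℝ => ‖id x‖ ^ (2 : ENNReal).toReal) (4 / 2) gam :=
    MemLp.norm_rpow_div h 2
  have h3 : (4 / 2 : ENNReal) = 2 := by
    rw [show (4 : ENNReal) = 2 * 2 by norm_num]
    exact ENNReal.mul_div_cancel_right (by norm_num) (by norm_num)
  rw [h3] at h2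
  convert h2 using 2 with x
  simp

lemma norm_conc {θ α : ℝ} (hθ : 0 < θ) (hα : 0 < α) : ∃ d₀ : ℕ, ∀ d : ℕ, d₀ < d →
    (stdGaussian (EE d)).real {g | θ ≤ |‖g‖ ^ 2 / d - 1|} ≤ α := by
  set V := Var[fun x : ℝ => x ^ 2; gam] with hV
  have hV0 : 0 ≤ V := variance_nonneg _ _
  obtain ⟨n, hn⟩ := exists_nat_gt (V / (θ ^ 2 * α))
  refine ⟨n, fun d hd => ?_⟩
  have hd0 : (0:ℝ) < d := by exact_mod_cast (Nat.zero_le n).trans_lt hd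
  have hnd : V / (θ ^ 2 * α) < d := hn.trans (by exact_mod_cast hd)
  let P : Measure (Fin d → ℝ) := Measure.pi fun _ => gam
  let X : (Fin d → ℝ) → ℝ := ∑ i : Fin d, fun ω => (ω i) ^ 2
  have hXi : ∀ i : Fin d, MemLp (fun ω : Fin d → ℝ => (ω i) ^ 2) 2 P := fun i =>
    gam_sq_memLp.comp_measurePreserving (measurePreserving_eval (fun _ : Fin d => gam) i)
  have hX : MemLp X 2 P := memLp_finsetSum' _ fun i _ => hXi i
  have hvar : Var[X; P] = d * V := by
    have := variance_sum_pi (μ := fun _ : Fin d => gam) (X := fun _ x => x ^ 2)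
      (fun _ => gam_sq_memLp)
    rw [this]; simp [V]
  have hE : ∫ x, X x ∂P = d := by
    have h1 : ∀ i : Fin d, ∫ ω, (ω i) ^ 2 ∂P = 1 := by
      intro i
      have h2 := integral_comp_eval (μ := fun _ : Fin d => gam) (i := i) (f := fun x : ℝ => x ^ 2)
        (by fun_prop)
      have h3 : ∫ x : ℝ, x ^ 2 ∂gam = 1 := by
        have := variance_fun_id_gaussianReal (μ := 0) (v := 1)
        rw [variance_of_integral_eq_zero (by fun_prop) (by simp)] at this
        simpa using this
      rw [← h3, ← h2]
    simp only [X, Finset.sum_apply]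
    rw [integral_finsetSum]
    · simp [h1]
    · intro i _
      exact (hXi i).integrable (by norm_num)
  have h := meas_ge_le_variance_div_sq (μ := P) hX (c := d * θ) (by positivity)
  rw [hvar, hE] at h
  rw [← map_pi_eq_stdGaussian, map_measureReal_apply (by fun_prop)
    (measurableSet_le measurable_const (by fun_prop))]
  have hset : (WithLp.toLp 2) ⁻¹' {g : EE d | θ ≤ |‖g‖ ^ 2 / d - 1|} = {ω | d * θ ≤ |X ω - d|} := by
    ext ω
    show θ ≤ |‖(WithLp.toLp 2 ω : EE d)‖ ^ 2 / d - 1| ↔ d * θ ≤ |X ω - d|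
    rw [EuclideanSpace.real_norm_sq_eq]
    have : X ω = ∑ i, ω i ^ 2 := by simp [X]
    rw [this]
    simp only
    have h1 : ∑ i, ω i ^ 2 - (d:ℝ) = d * ((∑ i, ω i ^ 2) / d - 1) := by field_simp
    rw [h1, abs_mul, abs_of_pos hd0, mul_le_mul_iff_right₀ hd0]
  rw [hset]
  calc P.real {ω | d * θ ≤ |X ω - d|} ≤ (ENNReal.ofReal (d * V / (d * θ) ^ 2)).toReal :=
        ENNReal.toReal_mono ENNReal.ofReal_ne_top h
    _ = d * V / (d * θ) ^ 2 := ENNReal.toReal_ofReal (by positivity)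
    _ ≤ α := by
        rw [div_lt_iff₀ (by positivity)] at hnd
        rw [div_le_iff₀ (by positivity)]
        nlinarith

lemma ratio_close {κ α : ℝ} (hκ : 0 < κ) (hα : 0 < α) : ∃ d₀ : ℕ, ∀ d : ℕ, d₀ < d →
    ∀ u : EE d, ‖u‖ = 1 → (stdGaussian (EE d)).real
      {g | κ < |√d / ‖g‖ * inner ℝ u g - inner ℝ u g|} ≤ α := by
  obtain ⟨M, hM0, hM⟩ : ∃ M : ℝ, 0 < M ∧ 1 / M ^ 2 ≤ α / 2 := by
    refine ⟨√(2 / α), by positivity, ?_⟩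
    rw [Real.sq_sqrt (by positivity)]
    simp
  set θ := min (1 / 2) (κ / (2 * M)) with hθ
  have hθ0 : 0 < θ := by positivity
  have hθ1 : θ ≤ 1 / 2 := min_le_left _ _
  have hθ2 : 2 * θ * M ≤ κ := by
    have : θ ≤ κ / (2 * M) := min_le_right _ _
    rw [le_div_iff₀ (by positivity)] at this; linarith
  obtain ⟨n, hn⟩ := norm_conc hθ0 (half_pos hα)
  refine ⟨n, fun d hd u hu => ?_⟩
  have hd0 : (0:ℝ) < d := by exact_mod_cast (Nat.zero_le n).trans_lt hd
  have hsub : {g : EE d | κ < |√d / ‖g‖ * inner ℝ u g - inner ℝ u g|} ⊆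
      (fun g : EE d => inner ℝ u g) ⁻¹' {x | M ≤ |x|} ∪ {g | θ ≤ |‖g‖ ^ 2 / d - 1|} := by
    intro g hg
    have hg' : κ < |√d / ‖g‖ * inner ℝ u g - inner ℝ u g| := hg
    by_contra hcon
    rw [Set.mem_union, not_or] at hcon
    have h1 : ¬ M ≤ |inner ℝ u g| := hcon.1
    have h2 : ¬ θ ≤ |‖g‖ ^ 2 / d - 1| := hcon.2
    push Not at h1 h2
    set r := ‖g‖ / √d with hr
    have hr0 : 0 ≤ r := by positivity
    have hr2 : ‖g‖ ^ 2 / d = r ^ 2 := by rw [hr, div_pow, Real.sq_sqrt hd0.le]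
    rw [hr2] at h2
    have hrinv : √d / ‖g‖ = 1 / r := by rw [hr]; simp
    rw [hrinv] at hg'
    have hrh : 1 / 2 < r := by
      rw [abs_lt] at h2; nlinarith
    have hr1 : |1 / r - 1| ≤ 2 * θ := by
      have e1 : 1 / r - 1 = (1 - r) / r := by field_simp
      rw [e1, abs_div, abs_of_nonneg hr0, div_le_iff₀ (by linarith)]
      have e2 : |1 - r| ≤ θ := by
        have : |r ^ 2 - 1| = |1 - r| * (r + 1) := by
          have e3 : r ^ 2 - 1 = -((1 - r) * (r + 1)) := by ring
          rw [e3, abs_neg, abs_mul, abs_of_nonneg (show 0 ≤ r + 1 by linarith)]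
        nlinarith [abs_nonneg (1 - r)]
      nlinarith
    have : |1 / r * inner ℝ u g - inner ℝ u g| ≤ 2 * θ * M := by
      have e1 : 1 / r * inner ℝ u g - inner ℝ u g = (1 / r - 1) * inner ℝ u g := by ring
      rw [e1, abs_mul]
      exact mul_le_mul hr1 h1.le (abs_nonneg _) (by positivity)
    linarith
  have h1 : (stdGaussian (EE d)).real ((fun g : EE d => inner ℝ u g) ⁻¹' {x | M ≤ |x|}) ≤ α / 2 := by
    rw [← map_measureReal_apply (by fun_prop) (measurableSet_le measurable_const (by fun_prop)),
      inner_law hu]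
    exact (gam_tail hM0).trans hM
  calc _ ≤ _ := measureReal_mono hsub
    _ ≤ _ := measureReal_union_le _ _
    _ ≤ α / 2 + α / 2 := add_le_add h1 (hn d hd)
    _ = α := by ring

lemma cap_symm {α : ℝ} (hα : 0 < α) : ∃ d₀ : ℕ, ∀ d : ℕ, d₀ < d → ∀ [NeZero d],
    ∀ u : EE d, ‖u‖ = 1 → ∀ t : ℝ, (stdGaussian (EE d)).real
      (symmDiff {g | t * √d ≤ inner ℝ u g} {g | t * ‖g‖ ≤ inner ℝ u g}) ≤ α := by
  obtain ⟨n, hn⟩ := ratio_close (κ := α / 4) (α := α / 2) (by positivity) (by positivity)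
  refine ⟨n, fun d hd _ u hu t => ?_⟩
  have hd0 : (0:ℝ) < d := by exact_mod_cast (Nat.zero_le n).trans_lt hd
  have h := key_symm (stdGaussian (EE d)) (Z := fun g => inner ℝ u g)
    (W := fun g => √d / ‖g‖ * inner ℝ u g) (by fun_prop) (inner_law hu)
    (by positivity) (hn d hd u hu) (t * √d)
  have h2 : (stdGaussian (EE d)).real
      (symmDiff {g | t * √d ≤ inner ℝ u g} {g | t * ‖g‖ ≤ inner ℝ u g}) =
      (stdGaussian (EE d)).real
      (symmDiff {g | t * √d ≤ inner ℝ u g} {g | t * √d ≤ √d / ‖g‖ * inner ℝ u g}) := by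
    refine measureReal_congr ?_
    refine Filter.EventuallyEq.symmDiff (Filter.EventuallyEq.rfl) ?_
    filter_upwards [gauss_ne_zero d] with g hg
    have hg0 : 0 < ‖g‖ := norm_pos_iff.2 hg
    have hs : 0 < √(d:ℝ) := Real.sqrt_pos.2 hd0
    refine propext ?_
    show t * ‖g‖ ≤ inner ℝ u g ↔ t * √d ≤ √d / ‖g‖ * inner ℝ u g
    rw [div_mul_eq_mul_div, le_div_iff₀ hg0,
      show t * √(d:ℝ) * ‖g‖ = √(d:ℝ) * (t * ‖g‖) by ring, mul_le_mul_iff_right₀ hs]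
  rw [h2]
  linarith

end NormConc

section Claims

lemma prod_real_apply {X Y : Type*} [MeasurableSpace X] [MeasurableSpace Y] (μ : Measure X)
    (ν : Measure Y) [IsProbabilityMeasure μ] [IsProbabilityMeasure ν] {s : Set (X × Y)}
    (hs : MeasurableSet s) : (μ.prod ν).real s = ∫ x, ν.real (Prod.mk x ⁻¹' s) ∂μ := by
  rw [measureReal_def, Measure.prod_apply hs, ← integral_toReal]
  · rfl
  · exact (measurable_measure_prodMk_left hs).aemeasurable
  · exact Filter.Eventually.of_forall fun x => measure_lt_top _ _

lemma prod_real_apply_symm {X Y : Type*} [MeasurableSpace X] [MeasurableSpace Y] (μ : Measure X)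
    (ν : Measure Y) [IsProbabilityMeasure μ] [IsProbabilityMeasure ν] {s : Set (X × Y)}
    (hs : MeasurableSet s) :
    (μ.prod ν).real s = ∫ y, μ.real ((fun x => (x, y)) ⁻¹' s) ∂ν := by
  rw [measureReal_def, Measure.prod_apply_symm hs, ← integral_toReal]
  · rfl
  · exact (measurable_measure_prodMk_right hs).aemeasurable
  · exact Filter.Eventually.of_forall fun x => measure_lt_top _ _

lemma gaussTail_eq {d : ℕ} {u : EE d} (hu : ‖u‖ = 1) (η : ℝ) :
    (stdGaussian (EE d)).real {g | η ≤ inner ℝ u g} = gaussTail η := by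
  unfold gaussTail
  rw [show gaussianReal 0 1 = gam from rfl, ← inner_law hu,
    Measure.map_apply (by fun_prop) measurableSet_Ici]
  rfl

lemma slice_scale {d : ℕ} {g : EE d} (hg : g ≠ 0) (t : ℝ) :
    {x : SS d | t * ‖g‖ ≤ inner ℝ (x : EE d) g} =
      {x : SS d | t ≤ inner ℝ (‖g‖⁻¹ • g) (x : EE d)} := by
  have hg0 : 0 < ‖g‖ := norm_pos_iff.2 hg
  ext x
  show t * ‖g‖ ≤ inner ℝ (x : EE d) g ↔ t ≤ inner ℝ (‖g‖⁻¹ • g) (x : EE d)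
  rw [real_inner_smul_left, real_inner_comm, inv_mul_eq_div, le_div_iff₀ hg0]

lemma cap_close {α : ℝ} (hα : 0 < α) : ∃ d₀ : ℕ, ∀ d : ℕ, d₀ < d → ∀ [NeZero d],
    ∀ t : ℝ, |capm d t - gaussTail (t * √d)| ≤ α := by
  obtain ⟨n, hn⟩ := cap_symm hα
  refine ⟨n, fun d hd _ t => ?_⟩
  let S : Set (SS d × EE d) := {p | t * ‖p.2‖ ≤ inner ℝ (p.1 : EE d) p.2}
  have hS : MeasurableSet S := measurableSet_le (by fun_prop) (by fun_prop)
  have h1 := prod_real_apply (sphereMeasure d) (stdGaussian (EE d)) hS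
  have h2 := prod_real_apply_symm (sphereMeasure d) (stdGaussian (EE d)) hS
  have h3 : ∫ y, (sphereMeasure d).real ((fun x => (x, y)) ⁻¹' S) ∂(stdGaussian (EE d)) = capm d t := by
    have : ∀ᵐ y ∂(stdGaussian (EE d)),
        (sphereMeasure d).real ((fun x => (x, y)) ⁻¹' S) = capm d t := by
      filter_upwards [gauss_ne_zero d] with g hg
      rw [← capm_eq t (‖g‖⁻¹ • g) (by simp [norm_smul, hg]), ← slice_scale hg]
      rfl
    rw [integral_congr_ae this]; simp
  have h4 : ∀ u : SS d, |(stdGaussian (EE d)).real (Prod.mk u ⁻¹' S) - gaussTail (t * √d)| ≤ α := by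
    intro u
    have hu : ‖(u : EE d)‖ = 1 := by simp
    have h5 := inter_close (stdGaussian (EE d)) {g | t * √d ≤ inner ℝ (u : EE d) g}
      {g | t * ‖g‖ ≤ inner ℝ (u : EE d) g} Set.univ Set.univ
    simp only [Set.inter_univ, symmDiff_self, Set.bot_eq_empty, measureReal_empty, add_zero] at h5
    rw [gaussTail_eq hu, abs_sub_comm] at h5
    exact h5.trans (hn d hd u hu t)
  rw [← h3, ← h2, h1]
  have hint : Integrable (fun u : SS d => (stdGaussian (EE d)).real (Prod.mk u ⁻¹' S))
      (sphereMeasure d) := by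
    refine Integrable.of_bound (C := 1)
      (measurable_measure_prodMk_left hS).ennreal_toReal.aestronglyMeasurable ?_
    refine Filter.Eventually.of_forall fun x => ?_
    rw [Real.norm_of_nonneg measureReal_nonneg]
    exact measureReal_le_one
  have h6 : ∫ u : SS d, ((stdGaussian (EE d)).real (Prod.mk u ⁻¹' S) - gaussTail (t * √d))
      ∂(sphereMeasure d) = ∫ u : SS d, (stdGaussian (EE d)).real (Prod.mk u ⁻¹' S)
      ∂(sphereMeasure d) - gaussTail (t * √d) := by
    rw [integral_sub hint (integrable_const _)]; simp
  rw [← h6, ← Real.norm_eq_abs]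
  have h7 := norm_integral_le_of_norm_le_const (μ := sphereMeasure d)
    (f := fun u : SS d => (stdGaussian (EE d)).real (Prod.mk u ⁻¹' S) - gaussTail (t * √d))
    (C := α) (Filter.Eventually.of_forall h4)
  simpa using h7

/-- joint tail of correlated Gaussians -/
def Bf (s η : ℝ) : ℝ := (gam.prod gam).real
  ({z : ℝ × ℝ | η ≤ z.1} ∩ {z : ℝ × ℝ | η ≤ s * z.1 + √(1 - s ^ 2) * z.2})

lemma Bf_nonneg (s η : ℝ) : 0 ≤ Bf s η := measureReal_nonneg
lemma Bf_le_one (s η : ℝ) : Bf s η ≤ 1 := measureReal_le_one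

lemma Bf_eq {d : ℕ} {u v : EE d} (hu : ‖u‖ = 1) (hv : ‖v‖ = 1) (η : ℝ) :
    (stdGaussian (EE d)).real ({g | η ≤ inner ℝ u g} ∩ {g | η ≤ inner ℝ v g}) =
      Bf (inner ℝ u v) η := by
  have hm : MeasurableSet ({z : ℝ × ℝ | η ≤ z.1} ∩ {z : ℝ × ℝ | η ≤ z.2}) :=
    (measurableSet_le measurable_const (by fun_prop)).inter
      (measurableSet_le measurable_const (by fun_prop))
  have h := congrArg (fun m : Measure (ℝ × ℝ) =>
    m.real ({z : ℝ × ℝ | η ≤ z.1} ∩ {z : ℝ × ℝ | η ≤ z.2})) (joint_law hu hv)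
  simp only at h
  rw [map_measureReal_apply (by fun_prop) hm,
    map_measureReal_apply (planeMap _).continuous.measurable hm] at h
  unfold Bf
  refine Eq.trans h ?_
  congr 1

lemma Bf_cont {ρ α : ℝ} (hρ : ρ ^ 2 ≤ 1) (hα : 0 < α) : ∃ δ : ℝ, 0 < δ ∧ ∀ s, s ^ 2 ≤ 1 →
    |s - ρ| ≤ δ → ∀ η, |Bf s η - Bf ρ η| ≤ α := by
  obtain ⟨M, hM0, hM⟩ : ∃ M : ℝ, 0 < M ∧ 1 / M ^ 2 ≤ α / 4 := by
    refine ⟨√(4 / α), by positivity, ?_⟩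
    rw [Real.sq_sqrt (by positivity)]
    simp
  set κ := α / 4 with hκ
  have hκ0 : 0 < κ := by positivity
  have hc : Continuous fun s : ℝ => √(1 - s ^ 2) := by fun_prop
  obtain ⟨δ, hδ0, hδ⟩ := Metric.continuous_iff.1 hc ρ (κ / (2 * M)) (by positivity)
  refine ⟨min (δ / 2) (κ / (2 * M)), by positivity, fun s hs hsρ η => ?_⟩
  have h1 : |√(1 - s ^ 2) - √(1 - ρ ^ 2)| ≤ κ / (2 * M) := by
    have := hδ s (by rw [Real.dist_eq]; exact lt_of_le_of_lt (hsρ.trans (min_le_left _ _)) (by linarith))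
    rw [Real.dist_eq] at this
    exact this.le
  have h2 : |s - ρ| ≤ κ / (2 * M) := hsρ.trans (min_le_right _ _)
  let Z : ℝ × ℝ → ℝ := fun z => ρ * z.1 + √(1 - ρ ^ 2) * z.2
  let W : ℝ × ℝ → ℝ := fun z => s * z.1 + √(1 - s ^ 2) * z.2
  have hsub : {z : ℝ × ℝ | κ < |W z - Z z|} ⊆ Prod.fst ⁻¹' {x | M ≤ |x|} ∪ Prod.snd ⁻¹' {x | M ≤ |x|} := by
    intro z hz
    have hz' : κ < |W z - Z z| := hz
    by_contra hcon
    rw [Set.mem_union, not_or] at hcon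
    have h3 : ¬ M ≤ |z.1| := hcon.1
    have h4 : ¬ M ≤ |z.2| := hcon.2
    push Not at h3 h4
    have e : W z - Z z = (s - ρ) * z.1 + (√(1 - s ^ 2) - √(1 - ρ ^ 2)) * z.2 := by simp only [W, Z]; ring
    have : |W z - Z z| ≤ κ / (2 * M) * M + κ / (2 * M) * M := by
      rw [e]
      refine (abs_add_le _ _).trans ?_
      rw [abs_mul, abs_mul]
      gcongr
    have e2 : κ / (2 * M) * M + κ / (2 * M) * M = κ := by field_simp; ring
    linarith
  have hmeas : MeasurableSet {x : ℝ | M ≤ |x|} := measurableSet_le measurable_const (by fun_prop)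
  have hbound : (gam.prod gam).real {z : ℝ × ℝ | κ < |W z - Z z|} ≤ α / 4 + α / 4 := by
    refine (measureReal_mono hsub).trans ((measureReal_union_le _ _).trans ?_)
    have h5 := (measurePreserving_fst (μ := gam) (ν := gam)).measureReal_preimage hmeas.nullMeasurableSet
    have h6 := (measurePreserving_snd (μ := gam) (ν := gam)).measureReal_preimage hmeas.nullMeasurableSet
    rw [h5, h6]
    exact add_le_add ((gam_tail hM0).trans hM) ((gam_tail hM0).trans hM)
  have h7 := key_symm (gam.prod gam) (Z := Z) (W := W) (by fun_prop) (plane_snd hρ) hκ0.le hbound η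
  have h8 := inter_close (gam.prod gam) {z : ℝ × ℝ | η ≤ z.1} {z : ℝ × ℝ | η ≤ z.1}
    {z | η ≤ Z z} {z | η ≤ W z}
  simp only [symmDiff_self, Set.bot_eq_empty, measureReal_empty, zero_add] at h8
  rw [abs_sub_comm] at h8
  have h9 : |Bf s η - Bf ρ η| ≤ (gam.prod gam).real (symmDiff {z | η ≤ Z z} {z | η ≤ W z}) := h8
  linarith

lemma gaussTail_anti {a b : ℝ} (h : a ≤ b) : gaussTail b ≤ gaussTail a :=
  ENNReal.toReal_mono (measure_ne_top _ _) (measure_mono (Set.Ici_subset_Ici.2 h))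

lemma gaussTail_diff {a b : ℝ} (h : a ≤ b) :
    gam.real (symmDiff (Set.Ici a) (Set.Ici b)) = gaussTail a - gaussTail b := by
  have hs : Set.Ici b ⊆ Set.Ici a := Set.Ici_subset_Ici.2 h
  have h1 : symmDiff (Set.Ici a) (Set.Ici b) = Set.Ici a \ Set.Ici b := by
    rw [symmDiff_def, sdiff_eq_bot_iff.2 hs]; simp
  rw [h1, measureReal_sdiff hs measurableSet_Ici]
  rfl

lemma gaussTail_lip {a b : ℝ} (h : a ≤ b) : gaussTail a ≤ gaussTail b + (b - a) := by
  have h1 : Set.Ici a ⊆ Set.Ici b ∪ Set.Icc a b := by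
    intro x hx
    rcases le_total b x with h | h
    · exact Or.inl h
    · exact Or.inr ⟨hx, h⟩
  have h2 : gam.real (Set.Ici a) ≤ gam.real (Set.Ici b) + gam.real (Set.Icc a b) :=
    (measureReal_mono h1).trans (measureReal_union_le _ _)
  have h3 := gam_Icc a b h
  have h4 : gam.real (Set.Ici a) = gaussTail a := rfl
  have h5 : gam.real (Set.Ici b) = gaussTail b := rfl
  linarith

lemma Bf_eta {ρ : ℝ} (hρ : ρ ^ 2 ≤ 1) (a b : ℝ) :
    |Bf ρ a - Bf ρ b| ≤ 2 * |gaussTail a - gaussTail b| := by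
  wlog h : a ≤ b generalizing a b
  · have := this b a (le_of_not_ge h)
    rw [abs_sub_comm, abs_sub_comm (gaussTail a)]; exact this
  have hm : MeasurableSet (symmDiff (Set.Ici a) (Set.Ici b)) :=
    measurableSet_Ici.symmDiff measurableSet_Ici
  have h1 := inter_close (gam.prod gam) {z : ℝ × ℝ | a ≤ z.1} {z : ℝ × ℝ | b ≤ z.1}
    {z : ℝ × ℝ | a ≤ ρ * z.1 + √(1 - ρ ^ 2) * z.2} {z : ℝ × ℝ | b ≤ ρ * z.1 + √(1 - ρ ^ 2) * z.2}
  have h2 : (gam.prod gam).real (symmDiff {z : ℝ × ℝ | a ≤ z.1} {z : ℝ × ℝ | b ≤ z.1}) =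
      gaussTail a - gaussTail b := by
    rw [← gaussTail_diff h, ← (measurePreserving_fst (μ := gam) (ν := gam)).measureReal_preimage
      hm.nullMeasurableSet]
    rfl
  have h3 : (gam.prod gam).real (symmDiff {z : ℝ × ℝ | a ≤ ρ * z.1 + √(1 - ρ ^ 2) * z.2}
      {z : ℝ × ℝ | b ≤ ρ * z.1 + √(1 - ρ ^ 2) * z.2}) = gaussTail a - gaussTail b := by
    rw [← gaussTail_diff h]
    conv_rhs => rw [← plane_snd hρ]
    rw [map_measureReal_apply (by fun_prop) hm]
    rfl
  rw [h2, h3] at h1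
  rw [abs_of_nonneg (sub_nonneg.2 (gaussTail_anti h))]
  unfold Bf
  linarith

end Claims

section CollClose

lemma coll_rot {d : ℕ} [NeZero d] (τ t : ℝ) (a : EE d) (ha : ‖a‖ = 1) :
    ((sphereMeasure d).prod (sphereMeasure d)).real (collSet τ {x : SS d | t ≤ inner ℝ a (x : EE d)}) =
    ((sphereMeasure d).prod (sphereMeasure d)).real (collSet τ
      {x : SS d | t ≤ inner ℝ (EuclideanSpace.single (0 : Fin d) (1:ℝ)) (x : EE d)}) := by
  set L := refl' a (EuclideanSpace.single (0 : Fin d) (1:ℝ)) with hL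
  have hm := (rot_mp L).prod (rot_mp L)
  have hcap : ∀ b : EE d, MeasurableSet {x : SS d | t ≤ inner ℝ b (x : EE d)} := fun b =>
    (isClosed_le continuous_const (inner_meas _)).measurableSet
  rw [← hm.measureReal_preimage (collSet_meas τ _ (hcap a)).nullMeasurableSet]
  congr 1
  ext z
  have h1 : ∀ x : SS d, inner ℝ a (rot L x : EE d) =
      inner ℝ (EuclideanSpace.single (0 : Fin d) (1:ℝ)) (x : EE d) := by
    intro x
    rw [rot_coe, hL, ← refl'_inner, refl'_apply (by rw [ha, e0_norm])]
  have h2 : dist (rot L z.1) (rot L z.2) = dist z.1 z.2 := by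
    rw [Subtype.dist_eq, Subtype.dist_eq, rot_coe, rot_coe, L.dist_map]
  show (t ≤ inner ℝ a (rot L z.2 : EE d) ∧ t ≤ inner ℝ a (rot L z.1 : EE d) ∧
    dist (rot L z.1) (rot L z.2) ≤ τ) ↔ (t ≤ inner ℝ _ (z.2 : EE d) ∧ t ≤ inner ℝ _ (z.1 : EE d) ∧
      dist z.1 z.2 ≤ τ)
  rw [h1, h1, h2]

lemma pair_meas {d : ℕ} [NeZero d] (s : ℝ) :
    ((sphereMeasure d).prod (sphereMeasure d)).real
      {uv : SS d × SS d | s ≤ inner ℝ (uv.1 : EE d) (uv.2 : EE d)} = capm d s := by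
  rw [prod_real_apply _ _ (isClosed_le (by fun_prop) (by fun_prop)).measurableSet]
  have : ∀ x : SS d, (sphereMeasure d).real (Prod.mk x ⁻¹'
      {uv : SS d × SS d | s ≤ inner ℝ (uv.1 : EE d) (uv.2 : EE d)}) = capm d s := fun x =>
    capm_eq s (x : EE d) (by simp)
  rw [integral_congr_ae (Filter.Eventually.of_forall this)]; simp

lemma coll_close {τ : ℝ} (hτ : 0 ≤ τ) (h0 : 0 < 1 - τ ^ 2 / 2) (h1 : 1 - τ ^ 2 / 2 < 1) {α : ℝ}
    (hα : 0 < α) : ∃ d₀ : ℕ, ∀ d : ℕ, d₀ < d → ∀ [NeZero d], ∀ t : ℝ,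
      |((sphereMeasure d).prod (sphereMeasure d)).real (collSet τ
        {x : SS d | t ≤ inner ℝ (EuclideanSpace.single (0 : Fin d) (1:ℝ)) (x : EE d)})
        - capm d (1 - τ ^ 2 / 2) * Bf (1 - τ ^ 2 / 2) (t * √d)| ≤ α * capm d (1 - τ ^ 2 / 2) := by
  set ρ := 1 - τ ^ 2 / 2 with hρ
  have hρ2 : ρ ^ 2 ≤ 1 := by nlinarith
  obtain ⟨n1, hn1⟩ := cap_symm (α := α / 8) (by positivity)
  obtain ⟨δ₁, hδ₁, hB⟩ := Bf_cont hρ2 (α := α / 4) (by positivity)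
  set δ := min δ₁ ((1 - ρ) / 2) with hδ
  have hδ0 : 0 < δ := lt_min hδ₁ (by linarith)
  have hδ1 : δ ≤ (1 - ρ) / 2 := min_le_right _ _
  obtain ⟨n2, hn2⟩ := capm_conc h0 (b := ρ + δ) (by linarith) (by linarith) (α / 2) (by positivity)
  refine ⟨max n1 n2, fun d hd _ t => ?_⟩
  have hd1 : n1 < d := (le_max_left _ _).trans_lt hd
  have hd2 : n2 ≤ d := ((le_max_right _ _).trans_lt hd).le
  set μ := sphereMeasure d with hμ
  set G := stdGaussian (EE d) with hG
  let D : Set (SS d × SS d) := {uv | ρ ≤ inner ℝ (uv.1 : EE d) (uv.2 : EE d)}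
  let D' : Set (SS d × SS d) := {uv | ρ + δ ≤ inner ℝ (uv.1 : EE d) (uv.2 : EE d)}
  have hD : MeasurableSet D := (isClosed_le (by fun_prop) (by fun_prop)).measurableSet
  have hD' : MeasurableSet D' := (isClosed_le (by fun_prop) (by fun_prop)).measurableSet
  let T : Set ((SS d × SS d) × EE d) := {p | t * ‖p.2‖ ≤ inner ℝ (p.1.1 : EE d) p.2} ∩
    {p | t * ‖p.2‖ ≤ inner ℝ (p.1.2 : EE d) p.2}
  have hT : MeasurableSet T := (measurableSet_le (by fun_prop) (by fun_prop)).inter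
    (measurableSet_le (by fun_prop) (by fun_prop))
  let S : Set ((SS d × SS d) × EE d) := (Prod.fst ⁻¹' D) ∩ T
  have hS : MeasurableSet S := (measurable_fst hD).inter hT
  have e1 := prod_real_apply (μ.prod μ) G hS
  have e2 := prod_real_apply_symm (μ.prod μ) G hS
  have e3 : ∫ y, (μ.prod μ).real ((fun x => (x, y)) ⁻¹' S) ∂G = (μ.prod μ).real (collSet τ
        {x : SS d | t ≤ inner ℝ (EuclideanSpace.single (0 : Fin d) (1:ℝ)) (x : EE d)}) := by
    have : ∀ᵐ y ∂G, (μ.prod μ).real ((fun x => (x, y)) ⁻¹' S) = (μ.prod μ).real (collSet τ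
        {x : SS d | t ≤ inner ℝ (EuclideanSpace.single (0 : Fin d) (1:ℝ)) (x : EE d)}) := by
      filter_upwards [gauss_ne_zero d] with g hg
      rw [← coll_rot τ t (‖g‖⁻¹ • g) (by simp [norm_smul, hg]), ← slice_scale hg]
      congr 1
      ext z
      show (ρ ≤ inner ℝ (z.1 : EE d) (z.2 : EE d) ∧ t * ‖g‖ ≤ inner ℝ (z.1 : EE d) g ∧
        t * ‖g‖ ≤ inner ℝ (z.2 : EE d) g) ↔ (t * ‖g‖ ≤ inner ℝ (z.2 : EE d) g ∧
        t * ‖g‖ ≤ inner ℝ (z.1 : EE d) g ∧ dist z.1 z.2 ≤ τ)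
      rw [dist_le_iff hτ]
      tauto
    rw [integral_congr_ae this]; simp
  set b := Bf ρ (t * √d) with hb
  have hb0 : 0 ≤ b := Bf_nonneg _ _
  have hb1 : b ≤ 1 := Bf_le_one _ _
  have e4 : ∫ z, D.indicator (fun _ => b) z ∂(μ.prod μ) = capm d ρ * b := by
    rw [integral_indicator_const _ hD, smul_eq_mul]
    congr 1
    exact pair_meas ρ
  have e5 : ∫ z, (D.indicator (fun _ => α / 2) z + D'.indicator (fun _ => (1:ℝ)) z) ∂(μ.prod μ) =
      capm d ρ * (α / 2) + capm d (ρ + δ) := by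
    rw [integral_add, integral_indicator_const _ hD, integral_indicator_const _ hD', smul_eq_mul,
      smul_eq_mul, mul_one]
    · congr 1
      · congr 1
        exact pair_meas ρ
      · exact pair_meas (ρ + δ)
    · exact (integrable_const _).indicator hD
    · exact (integrable_const _).indicator hD'
  have hpt : ∀ z : SS d × SS d, |G.real (Prod.mk z ⁻¹' S) - D.indicator (fun _ => b) z| ≤
      D.indicator (fun _ => α / 2) z + D'.indicator (fun _ => (1:ℝ)) z := by
    intro z
    by_cases hz : z ∈ D
    · have hsl : Prod.mk z ⁻¹' S = {g : EE d | t * ‖g‖ ≤ inner ℝ (z.1 : EE d) g} ∩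
          {g : EE d | t * ‖g‖ ≤ inner ℝ (z.2 : EE d) g} := by
        ext g
        show (z ∈ D ∧ t * ‖g‖ ≤ inner ℝ (z.1 : EE d) g ∧ t * ‖g‖ ≤ inner ℝ (z.2 : EE d) g) ↔
          (t * ‖g‖ ≤ inner ℝ (z.1 : EE d) g ∧ t * ‖g‖ ≤ inner ℝ (z.2 : EE d) g)
        simp [hz]
      have hz0 : ρ ≤ inner ℝ (z.1 : EE d) (z.2 : EE d) := hz
      rw [Set.indicator_of_mem hz, Set.indicator_of_mem hz]
      by_cases hz' : z ∈ D'
      · rw [Set.indicator_of_mem hz']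
        have g0 : 0 ≤ G.real (Prod.mk z ⁻¹' S) := measureReal_nonneg
        have g1 : G.real (Prod.mk z ⁻¹' S) ≤ 1 := measureReal_le_one
        rw [abs_le]
        constructor <;> linarith
      · rw [Set.indicator_of_notMem hz']
        have hz1 : ¬ (ρ + δ ≤ inner ℝ (z.1 : EE d) (z.2 : EE d)) := hz'
        push Not at hz1
        have hu : ‖(z.1 : EE d)‖ = 1 := by simp
        have hv : ‖(z.2 : EE d)‖ = 1 := by simp
        have hi2 : (inner ℝ (z.1 : EE d) (z.2 : EE d)) ^ 2 ≤ 1 := by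
          have : inner ℝ (z.1 : EE d) (z.2 : EE d) < 1 := by linarith
          nlinarith
        have f1 := hB _ hi2 (by
          rw [abs_of_nonneg (by linarith)]
          have : δ ≤ δ₁ := min_le_left _ _
          linarith) (t * √d)
        have f2 := inter_close G {g | t * √d ≤ inner ℝ (z.1 : EE d) g}
          {g | t * ‖g‖ ≤ inner ℝ (z.1 : EE d) g} {g | t * √d ≤ inner ℝ (z.2 : EE d) g}
          {g | t * ‖g‖ ≤ inner ℝ (z.2 : EE d) g}
        rw [Bf_eq hu hv, ← hsl] at f2
        have f3 := hn1 d hd1 z.1 hu t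
        have f4 := hn1 d hd1 z.2 hv t
        have f5 : |Bf (inner ℝ (z.1 : EE d) (z.2 : EE d)) (t * √d) - G.real (Prod.mk z ⁻¹' S)| ≤ α / 4 := by
          linarith
        rw [← hb] at f1
        rw [abs_le] at f1 f5 ⊢
        constructor <;> linarith [f1.1, f1.2, f5.1, f5.2]
    · have hsl : Prod.mk z ⁻¹' S = ∅ := by
        ext g
        show (z ∈ D ∧ _) ↔ _
        simp [hz]
      rw [hsl, Set.indicator_of_notMem hz, Set.indicator_of_notMem hz]
      simp only [measureReal_empty, sub_zero, abs_zero, zero_add]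
      exact Set.indicator_nonneg (fun _ _ => zero_le_one) _
  have hint : Integrable (fun z : SS d × SS d => G.real (Prod.mk z ⁻¹' S)) (μ.prod μ) := by
    refine Integrable.of_bound (C := 1)
      (measurable_measure_prodMk_left hS).ennreal_toReal.aestronglyMeasurable ?_
    refine Filter.Eventually.of_forall fun x => ?_
    rw [Real.norm_of_nonneg measureReal_nonneg]
    exact measureReal_le_one
  have hi1 : Integrable (D.indicator fun _ => b) (μ.prod μ) := (integrable_const _).indicator hD
  rw [← e3, ← e2, e1, ← e4, ← integral_sub hint hi1, ← Real.norm_eq_abs]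
  refine (norm_integral_le_of_norm_le (((integrable_const _).indicator hD).add
    ((integrable_const _).indicator hD')) (Filter.Eventually.of_forall hpt)).trans ?_
  refine e5.le.trans ?_
  have := hn2 d hd2
  linarith

end CollClose

lemma lambdaFn_eq (τ η : ℝ) : lambdaFn τ η = Bf (1 - τ ^ 2 / 2) η / gaussTail η := by
  unfold lambdaFn Bf
  have : 1 - (1 - τ ^ 2 / 2) ^ 2 = τ ^ 2 - τ ^ 4 / 4 := by ring
  rw [this]
  rfl

lemma condCollision_eq {d : ℕ} [NeZero d] {τ : ℝ} (hτ : 0 ≤ τ) (A : Set (SS d))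
    (hA : MeasurableSet A) : condCollision d A τ =
      ((sphereMeasure d).prod (sphereMeasure d)).real (collSet τ A) /
        ((sphereMeasure d).real A * capm d (1 - τ ^ 2 / 2)) := by
  rw [← denom_eq hτ A hA]
  rfl

/-- For `0 < τ < √2`, `c₀ > 0`, `ε > 0`, there is `d₀` such that for all `d ≥ d₀` and all
measurable `A ⊆ S^{d-1}` with `c₀ ≤ μ(A) ≤ 1/2`,
`Pr[v ∈ A ∣ u ∈ A, ‖u - v‖ ≤ τ] ≤ Λ(τ, Φ_c⁻¹(μ(A))) + ε`, with equality up to `ε` when `A` is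
a spherical cap. -/
theorem conditional_collision_upper_bound (τ c₀ ε : ℝ)
    (hτ0 : 0 < τ) (hτ : τ < Real.sqrt 2) (hc₀ : 0 < c₀) (hε : 0 < ε) :
    ∃ d₀ : ℕ, ∀ d : ℕ, ∀ hd : d₀ < d,
      ∀ A : Set (Metric.sphere (0 : EuclideanSpace ℝ (Fin d)) 1), MeasurableSet A →
        c₀ ≤ (sphereMeasure d A).toReal → (sphereMeasure d A).toReal ≤ 1 / 2 →
        ∀ η : ℝ, gaussTail η = (sphereMeasure d A).toReal →
          condCollision d A τ ≤ lambdaFn τ η + ε ∧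
            ((∃ t : ℝ,
                A = {u : Metric.sphere (0 : EuclideanSpace ℝ (Fin d)) 1 |
                  t ≤ (u : EuclideanSpace ℝ (Fin d))
                        ⟨0, Nat.lt_of_le_of_lt (Nat.zero_le d₀) hd⟩}) →
              |condCollision d A τ - lambdaFn τ η| ≤ ε) := by
  set ρ := 1 - τ ^ 2 / 2 with hρ
  have hτ2 : τ ^ 2 < 2 := by
    have h1 := Real.sq_sqrt (show (0:ℝ) ≤ 2 by norm_num)
    have h2 := Real.sqrt_nonneg (2:ℝ)
    nlinarith
  have h0 : 0 < ρ := by rw [hρ]; linarith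
  have h1 : ρ < 1 := by rw [hρ]; nlinarith
  have hρ2 : ρ ^ 2 ≤ 1 := by nlinarith
  set α := ε * c₀ / 8 with hα
  have hα0 : 0 < α := by positivity
  obtain ⟨n1, hn1⟩ := cap_close hα0
  obtain ⟨n2, hn2⟩ := coll_close hτ0.le h0 h1 hα0
  refine ⟨max n1 n2, fun d hd A hA hc hhalf η hη => ?_⟩
  have hd1 : n1 < d := (le_max_left _ _).trans_lt hd
  have hd2 : n2 < d := (le_max_right _ _).trans_lt hd
  have hdpos : 0 < d := (Nat.zero_le _).trans_lt hd
  haveI : NeZero d := ⟨hdpos.ne'⟩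
  have hs : 0 < √(d:ℝ) := Real.sqrt_pos.2 (by exact_mod_cast hdpos)
  set m := (sphereMeasure d A).toReal with hm
  have hm0 : 0 < m := hc₀.trans_le hc
  have hmr : (sphereMeasure d).real A = m := rfl
  set k := capm d ρ with hk
  have hk0 : 0 < k := capm_pos h1
  have hk1 : k ≤ 1 := measureReal_le_one
  have hcap := hn1 d hd1
  have hcoll := hn2 d hd2
  have hmB : 8 * α / m ≤ ε := by
    rw [div_le_iff₀ hm0, hα]
    nlinarith
  rw [lambdaFn_eq, condCollision_eq hτ0.le A hA, hη, hmr, ← hρ, ← hk]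
  set I := ((sphereMeasure d).prod (sphereMeasure d)).real (collSet τ A) with hI
  constructor
  · obtain ⟨t, ht1, ht2, ht3⟩ := sphere_rearr (EuclideanSpace.single (0 : Fin d) (1:ℝ)) τ A hA
      (α * k) (by positivity)
    rw [hmr] at ht1 ht2
    have hδ : α * k ≤ α := by nlinarith
    have a1 : m ≤ capm d t + α * k := ht2
    have a2 := abs_le.1 (hcap t)
    have a3 : gaussTail (t * √d) ≤ m + 3 * α := by
      have b1 : capm d (t + α / √d) ≤ m + α * k :=
        ht1 (t + α / √d) (by have : 0 < α / √(d:ℝ) := by positivity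
                             linarith)
      have b2 := abs_le.1 (hcap (t + α / √d))
      have b4 : (t + α / √d) * √d = t * √d + α := by field_simp
      rw [b4] at b2
      have b3 := gaussTail_lip (a := t * √d) (b := t * √d + α) (by linarith)
      linarith [b2.1, b2.2]
    have a4 : |gaussTail (t * √d) - gaussTail η| ≤ 3 * α := by
      rw [hη, abs_le]
      constructor <;> linarith [a2.1, a2.2]
    have a5 := Bf_eta hρ2 (t * √d) η
    have a6 := abs_le.1 (hcoll t)
    have a7 : Bf ρ (t * √d) ≤ Bf ρ η + 6 * α := by
      have := (abs_le.1 a5).2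
      linarith
    have a8 : I ≤ k * (Bf ρ η + 8 * α) := by
      have := mul_le_mul_of_nonneg_left a7 hk0.le
      linarith [a6.1, a6.2]
    calc I / (m * k) ≤ k * (Bf ρ η + 8 * α) / (m * k) := by gcongr
      _ = Bf ρ η / m + 8 * α / m := by field_simp
      _ ≤ Bf ρ η / m + ε := by linarith
  · rintro ⟨t, ht⟩
    have hAe : A = {x : SS d | t ≤ inner ℝ (EuclideanSpace.single (0 : Fin d) (1:ℝ)) (x : EE d)} := by
      rw [ht]
      ext x
      show t ≤ _ ↔ t ≤ _
      rw [inner_e0]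
      have : (⟨0, Nat.lt_of_le_of_lt (Nat.zero_le (max n1 n2)) hd⟩ : Fin d) = 0 := Fin.ext (by simp)
      rw [this]
    have a1 : m = capm d t := by rw [← hmr, hAe]; rfl
    have a2 := hcap t
    rw [← a1, ← hη] at a2
    have a5 := Bf_eta hρ2 (t * √d) η
    rw [abs_sub_comm (gaussTail (t * √d))] at a5
    have a6 := hcoll t
    rw [← hAe, ← hI] at a6
    have a7 : |Bf ρ (t * √d) - Bf ρ η| ≤ 2 * α := by linarith
    have a8 : |I - k * Bf ρ η| ≤ k * (8 * α) := by
      have e : I - k * Bf ρ η = (I - k * Bf ρ (t * √d)) + k * (Bf ρ (t * √d) - Bf ρ η) := by ring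
      rw [e]
      refine (abs_add_le _ _).trans ?_
      rw [abs_mul, abs_of_pos hk0]
      have := mul_le_mul_of_nonneg_left a7 hk0.le
      have := mul_pos hk0 hα0
      linarith
    have e : I / (m * k) - Bf ρ η / m = (I - k * Bf ρ η) / (m * k) := by field_simp
    rw [e, abs_div, abs_of_pos (mul_pos hm0 hk0)]
    calc _ ≤ k * (8 * α) / (m * k) := by gcongr
      _ = 8 * α / m := by field_simp
      _ ≤ ε := hmB
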